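/- arXiv:1809.02315 — 5 statements merged into one kernel-verified Lean document; each statement's English description precedes it below -/
import Mathlib

section
/- Assume T is connected, and let C be a pre-cluster tilting subcategory of T containing a nonzero object. Then C is a cluster tilting subcategory of T if and only if the quotient category T/C is abelian. -/
/-!
Let `C` be a pre-cluster tilting subcategory of `T`.

If `C` is cluster tilting, every object has a resolution and a coresolution of length one by
objects of `C`. The kernel of a morphism `f : X ⟶ Y` of `T/C` is the cocone of `X ⟶ Y ⟶ c₁⟦1⟧`,
where `c₁ ⟶ c₀ ⟶ Y` is a resolution, and the cokernel is obtained dually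
(`ClusterTilting.exists_kernel`, `ClusterTilting.exists_cokernel`); rigidity of `C` shows that
monomorphisms and epimorphisms are normal. Hence `T/C` is abelian (`ClusterTilting.isAbelian`).

Conversely, suppose that `T/C` is abelian; only kernels and cokernels are needed. If `C ≠ ^⊥₁C`,
there is an indecomposable `X` in `^⊥₁C` outside `C`. Comparing weak cokernels, which come from the
octahedral axiom applied to approximations `c₁ ⟶ X ⟶ c₀`, with cokernels shows that there are no
nonzero morphisms from `C` to `X` (`hom_from_eq_zero`). If `Y` is the cone of `X ⟶ c₀`, the same
vanishing for a summand of `Y` outside `C` makes this summand isomorphic to `X⟦1⟧`, so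
`X ⟶ c₀` is zero and there are no nonzero morphisms from `X` to `C` either (`hom_to_eq_zero`).
Thus `X` lies in the class `orth C` of objects with no morphisms and no extensions from or to `C`.

Kernels in `T/C` make every nonzero morphism from an indecomposable object of `orth C` a split
monomorphism, and hence every nonzero morphism to it a split epimorphism
(`splitMono_of_ne_zero`, `splitEpi_of_ne_zero`). Therefore an indecomposable object that is not
orthogonal to `orth C` belongs to `orth C`, and by the Krull–Schmidt property `T` is the direct sum
of `orth C` and its orthogonal `biorth C`, which contains `C` (`exists_decomposition`). As `T` is
connected and `C` is nonzero, `orth C` is zero, which contradicts the existence of `X`.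
-/

open CategoryTheory CategoryTheory.Limits CategoryTheory.Pretriangulated

attribute [local instance] CategoryTheory.Limits.hasBinaryBiproducts_of_finite_biproducts

universe v u

namespace ClusterPaper

variable {T : Type u} [Category.{v} T] [Preadditive T] [HasZeroObject T]
  [HasShift T ℤ] [∀ n : ℤ, (shiftFunctor T n).Additive] [Pretriangulated T]
  [HasFiniteBiproducts T]

/-- `X` is a direct summand of `Z`. -/
def IsSummand (X Z : T) : Prop :=
  ∃ (s : X ⟶ Z) (r : Z ⟶ X), s ≫ r = 𝟙 X

/-- The category is Krull–Schmidt: every object is a finite direct sum of objects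
whose endomorphism rings are local. -/
def IsKrullSchmidt : Prop :=
  ∀ X : T, ∃ (n : ℕ) (f : Fin n → T),
    Nonempty (X ≅ ⨁ f) ∧ ∀ i, IsLocalRing (End (f i))

/-- A class of objects is closed under isomorphisms. -/
def IsoClosed (P : T → Prop) : Prop := ∀ ⦃X Y : T⦄, (X ≅ Y) → P X → P Y

/-- A class of objects is closed under finite direct sums. -/
def SumClosed (P : T → Prop) : Prop :=
  ∀ ⦃X Y : T⦄, P X → P Y → P (X ⊞ Y)

/-- A class of objects is closed under direct summands. -/
def SummandClosed (P : T → Prop) : Prop := ∀ ⦃X Z : T⦄, IsSummand X Z → P Z → P X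

/-- `Hom(X, Y[1]) = 0`, i.e. `E(X,Y) = 0` for the extriangulated structure on a
triangulated category. -/
def Ext1Zero (X Y : T) : Prop := ∀ f : X ⟶ Y⟦(1 : ℤ)⟧, f = 0

/-- The right perpendicular category `P^⊥1`. -/
def rightPerp (P : T → Prop) : T → Prop := fun X => ∀ ⦃C : T⦄, P C → Ext1Zero C X

/-- The left perpendicular category `^⊥1 P`. -/
def leftPerp (P : T → Prop) : T → Prop := fun X => ∀ ⦃C : T⦄, P C → Ext1Zero X C

/-- A cotorsion pair `(U, V)`. -/
structure CotorsionPair (U V : T → Prop) : Prop where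
  summandClosed_fst : SummandClosed U
  summandClosed_snd : SummandClosed V
  ext_zero : ∀ ⦃X Y : T⦄, U X → V Y → Ext1Zero X Y
  tri_left : ∀ B : T, ∃ (VB UB : T) (f : VB ⟶ UB) (g : UB ⟶ B) (h : B ⟶ VB⟦(1 : ℤ)⟧),
    V VB ∧ U UB ∧ Triangle.mk f g h ∈ distTriang T
  tri_right : ∀ B : T, ∃ (VB UB : T) (f : B ⟶ VB) (g : VB ⟶ UB) (h : UB ⟶ B⟦(1 : ℤ)⟧),
    V VB ∧ U UB ∧ Triangle.mk f g h ∈ distTriang T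

/-- `f : C₀ ⟶ X` is a right `P`-approximation of `X`. -/
def IsRightApprox (P : T → Prop) {C₀ X : T} (f : C₀ ⟶ X) : Prop :=
  ∀ ⦃C' : T⦄, P C' → ∀ g : C' ⟶ X, ∃ h : C' ⟶ C₀, h ≫ f = g

/-- `f : X ⟶ C₀` is a left `P`-approximation of `X`. -/
def IsLeftApprox (P : T → Prop) {X C₀ : T} (f : X ⟶ C₀) : Prop :=
  ∀ ⦃C' : T⦄, P C' → ∀ g : X ⟶ C', ∃ h : C₀ ⟶ C', f ≫ h = g

/-- Every object admits a right `P`-approximation. -/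
def ContravariantlyFinite (P : T → Prop) : Prop :=
  ∀ X : T, ∃ (C₀ : T) (f : C₀ ⟶ X), P C₀ ∧ IsRightApprox P f

/-- Every object admits a left `P`-approximation. -/
def CovariantlyFinite (P : T → Prop) : Prop :=
  ∀ X : T, ∃ (C₀ : T) (f : X ⟶ C₀), P C₀ ∧ IsLeftApprox P f

/-- A pre-cluster tilting subcategory. -/
structure PreClusterTilting (C : T → Prop) : Prop where
  sumClosed : SumClosed C
  summandClosed : SummandClosed C
  rigid : ∀ ⦃X Y : T⦄, C X → C Y → Ext1Zero X Y
  contravariantlyFinite : ContravariantlyFinite C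
  covariantlyFinite : CovariantlyFinite C
  perp_eq : rightPerp C = leftPerp C

/-- A cluster tilting subcategory. -/
structure ClusterTilting (C : T → Prop) extends PreClusterTilting C : Prop where
  eq_rightPerp : C = rightPerp C
  eq_leftPerp : C = leftPerp C

/-- `f` factors through an object of `D`. -/
def FactorsThru (D : T → Prop) {X Y : T} (f : X ⟶ Y) : Prop :=
  ∃ (Z : T) (g : X ⟶ Z) (h : Z ⟶ Y), D Z ∧ g ≫ h = f

/-- The hom relation identifying two morphisms whose difference factors through `D`. -/
def quotRel (D : T → Prop) : HomRel T := fun {X Y} f g => FactorsThru D (f - g)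

/-- The additive quotient category `T/D`. -/
abbrev QuotCat (D : T → Prop) := CategoryTheory.Quotient (quotRel D)

/-- A category is abelian (as a property): it admits an abelian structure. -/
def IsAbelian (A : Type*) [Category A] : Prop := Nonempty (Abelian A)

/-- An object is indecomposable: it is nonzero, and in any direct sum
decomposition one summand is zero. -/
def Indec (X : T) : Prop :=
  ¬ IsZero X ∧ ∀ (Y Z : T), (X ≅ Y ⊞ Z) → IsZero Y ∨ IsZero Z

/-- `X ∈ CoCone(P, Q)`: there is a triangle `X → B → C' → X[1]` with `B ∈ P`, `C' ∈ Q`. -/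
def CoCone (P Q : T → Prop) : T → Prop := fun X =>
  ∃ (B C' : T) (f : X ⟶ B) (g : B ⟶ C') (h : C' ⟶ X⟦(1 : ℤ)⟧),
    P B ∧ Q C' ∧ Triangle.mk f g h ∈ distTriang T

/-- `Y ∈ Cone(P, Q)`: there is a triangle `A → B → Y → A[1]` with `A ∈ P`, `B ∈ Q`. -/
def Cone (P Q : T → Prop) : T → Prop := fun Y =>
  ∃ (A B : T) (f : A ⟶ B) (g : B ⟶ Y) (h : Y ⟶ A⟦(1 : ℤ)⟧),
    P A ∧ Q B ∧ Triangle.mk f g h ∈ distTriang T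

/-- `U + V`: objects isomorphic to a direct sum of an object of `U` and an object of `V`. -/
def plusCat (U V : T → Prop) : T → Prop := fun X =>
  ∃ (A B : T), U A ∧ V B ∧ Nonempty (X ≅ A ⊞ B)

/-- A class of objects is closed under extensions. -/
def ExtClosed (P : T → Prop) : Prop :=
  ∀ ⦃A B C' : T⦄ (f : A ⟶ B) (g : B ⟶ C') (h : C' ⟶ A⟦(1 : ℤ)⟧),
    (Triangle.mk f g h ∈ distTriang T) → P A → P C' → P B

/-- The triangulated category `T` is connected: it is not the direct sum of two
nonzero triangulated (iso-closed, summand-closed, extension-closed, mutually Hom-orthogonal)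
subcategories. -/
def ConnectedCat : Prop :=
  ¬ ∃ (T₁ T₂ : T → Prop),
    IsoClosed T₁ ∧ IsoClosed T₂ ∧ SummandClosed T₁ ∧ SummandClosed T₂ ∧
    ExtClosed T₁ ∧ ExtClosed T₂ ∧
    (∃ X, T₁ X ∧ ¬ IsZero X) ∧ (∃ X, T₂ X ∧ ¬ IsZero X) ∧
    (∀ X : T, ∃ (A B : T), T₁ A ∧ T₂ B ∧ Nonempty (X ≅ A ⊞ B)) ∧
    (∀ ⦃X Y : T⦄, T₁ X → T₂ Y → ∀ f : X ⟶ Y, f = 0) ∧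
    (∀ ⦃X Y : T⦄, T₂ X → T₁ Y → ∀ f : X ⟶ Y, f = 0)

set_option linter.unusedSectionVars false

/-! ### Exactness of `Hom` on distinguished triangles -/

section Exactness

variable {X Y Z W : T} {f : X ⟶ Y} {g : Y ⟶ Z} {h : Z ⟶ X⟦(1 : ℤ)⟧}

lemma tri_zero₁₂ (H : Triangle.mk f g h ∈ distTriang T) : f ≫ g = 0 :=
  comp_distTriang_mor_zero₁₂ _ H

lemma tri_zero₂₃ (H : Triangle.mk f g h ∈ distTriang T) : g ≫ h = 0 :=
  comp_distTriang_mor_zero₂₃ _ H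

lemma tri_zero₃₁ (H : Triangle.mk f g h ∈ distTriang T) : h ≫ f⟦(1 : ℤ)⟧' = 0 :=
  comp_distTriang_mor_zero₃₁ _ H

lemma tri_desc₂ (H : Triangle.mk f g h ∈ distTriang T) (u : Y ⟶ W) (hu : f ≫ u = 0) :
    ∃ v : Z ⟶ W, u = g ≫ v :=
  Triangle.yoneda_exact₂ _ H u hu

lemma tri_desc₃ (H : Triangle.mk f g h ∈ distTriang T) (u : Z ⟶ W) (hu : g ≫ u = 0) :
    ∃ v : X⟦(1 : ℤ)⟧ ⟶ W, u = h ≫ v :=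
  Triangle.yoneda_exact₃ _ H u hu

/-- Exactness of `Hom(-, W)` at the first vertex: the obstruction to extending `u` along `f`
is the class `h ≫ u⟦1⟧`. -/
lemma tri_desc₁ (H : Triangle.mk f g h ∈ distTriang T) (u : X ⟶ W)
    (hu : h ≫ u⟦(1 : ℤ)⟧' = 0) : ∃ v : Y ⟶ W, u = f ≫ v := by
  obtain ⟨v, hv⟩ : ∃ v : Y⟦(1 : ℤ)⟧ ⟶ W⟦(1 : ℤ)⟧, u⟦(1 : ℤ)⟧' = (-f⟦(1 : ℤ)⟧') ≫ v :=
    Triangle.yoneda_exact₃ _ (rot_of_distTriang _ H) (u⟦(1 : ℤ)⟧') hu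
  obtain ⟨w, rfl⟩ := (shiftFunctor T (1 : ℤ)).map_surjective v
  refine ⟨-w, (shiftFunctor T (1 : ℤ)).map_injective ?_⟩
  rw [Preadditive.comp_neg, Functor.map_neg, Functor.map_comp, ← Preadditive.neg_comp]
  exact hv

lemma tri_lift₂ (H : Triangle.mk f g h ∈ distTriang T) (u : W ⟶ Y) (hu : u ≫ g = 0) :
    ∃ v : W ⟶ X, u = v ≫ f :=
  Triangle.coyoneda_exact₂ _ H u hu

lemma tri_lift₃ (H : Triangle.mk f g h ∈ distTriang T) (u : W ⟶ Z) (hu : u ≫ h = 0) :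
    ∃ v : W ⟶ Y, u = v ≫ g :=
  Triangle.coyoneda_exact₃ _ H u hu

lemma tri_lift₁ (H : Triangle.mk f g h ∈ distTriang T) (u : W ⟶ X⟦(1 : ℤ)⟧)
    (hu : u ≫ f⟦(1 : ℤ)⟧' = 0) : ∃ v : W ⟶ Z, u = v ≫ h :=
  Triangle.coyoneda_exact₁ _ H u hu

/-- Exactness of `Hom(W, -)` at the shift of the second vertex. -/
lemma tri_lift₂_shift (H : Triangle.mk f g h ∈ distTriang T) (u : W ⟶ Y⟦(1 : ℤ)⟧)
    (hu : u ≫ g⟦(1 : ℤ)⟧' = 0) : ∃ v : W ⟶ X⟦(1 : ℤ)⟧, u = v ≫ f⟦(1 : ℤ)⟧' := by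
  obtain ⟨v, hv⟩ : ∃ v : W ⟶ X⟦(1 : ℤ)⟧, u = v ≫ (-f⟦(1 : ℤ)⟧') :=
    tri_lift₁ (rot_of_distTriang _ H) u hu
  refine ⟨-v, ?_⟩
  rw [Preadditive.neg_comp, ← Preadditive.comp_neg]
  exact hv

end Exactness

lemma shift_map_eq_zero {X Y : T} {f : X ⟶ Y} : f⟦(1 : ℤ)⟧' = 0 ↔ f = 0 :=
  (shiftFunctor T (1 : ℤ)).map_eq_zero_iff

/-! ### The ideal of morphisms through `C` -/

section Ideal

variable {C : T → Prop} {W X Y Z : T}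

namespace PreClusterTilting

/-- Zero objects are summands of an approximating object. -/
lemma of_isZero (hC : PreClusterTilting C) (hX : IsZero X) : C X := by
  obtain ⟨c, _, hc, _⟩ := hC.contravariantlyFinite X
  exact hC.summandClosed ⟨0, 0, hX.eq_of_src _ _⟩ hc

lemma ft_zero (hC : PreClusterTilting C) : FactorsThru C (0 : X ⟶ Y) := by
  obtain ⟨c, _, hc, _⟩ := hC.contravariantlyFinite X
  exact ⟨c, 0, 0, hc, by simp⟩

lemma ft_add (hC : PreClusterTilting C) {f g : X ⟶ Y} (hf : FactorsThru C f)
    (hg : FactorsThru C g) : FactorsThru C (f + g) := by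
  obtain ⟨c, a, b, hc, rfl⟩ := hf
  obtain ⟨c', a', b', hc', rfl⟩ := hg
  exact ⟨c ⊞ c', biprod.lift a a', biprod.desc b b', hC.sumClosed hc hc', by simp⟩

end PreClusterTilting

lemma ft_comp_left {f : X ⟶ Y} (hf : FactorsThru C f) (g : W ⟶ X) :
    FactorsThru C (g ≫ f) := by
  obtain ⟨c, a, b, hc, rfl⟩ := hf
  exact ⟨c, g ≫ a, b, hc, by simp⟩

lemma ft_comp_right {f : X ⟶ Y} (hf : FactorsThru C f) (g : Y ⟶ Z) :
    FactorsThru C (f ≫ g) := by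
  obtain ⟨c, a, b, hc, rfl⟩ := hf
  exact ⟨c, a, b ≫ g, hc, by simp⟩

lemma ft_neg {f : X ⟶ Y} (hf : FactorsThru C f) : FactorsThru C (-f) := by
  obtain ⟨c, a, b, hc, rfl⟩ := hf
  exact ⟨c, a, -b, hc, by simp⟩

lemma PreClusterTilting.ft_sub (hC : PreClusterTilting C) {f g : X ⟶ Y} (hf : FactorsThru C f)
    (hg : FactorsThru C g) : FactorsThru C (f - g) := by
  rw [sub_eq_add_neg]
  exact hC.ft_add hf (ft_neg hg)

/-- Factoring through `C` is a congruence, so `T/C` is a genuine quotient by it. -/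
lemma PreClusterTilting.congruence (hC : PreClusterTilting C) : Congruence (quotRel C) where
  equivalence :=
    { refl := fun f => by
        change FactorsThru C (f - f)
        rw [sub_self]
        exact hC.ft_zero
      symm := fun {f g} h => by
        change FactorsThru C (g - f)
        rw [← neg_sub]
        exact ft_neg h
      trans := fun {f g k} h h' => by
        change FactorsThru C (f - k)
        rw [← sub_add_sub_cancel f g k]
        exact hC.ft_add h h' }
  comp_left := fun {_ _ _} f {g g'} h => by
    change FactorsThru C (f ≫ g - f ≫ g')
    rw [← Preadditive.comp_sub]
    exact ft_comp_left h f
  comp_right := fun {_ _ _} {f f'} g h => by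
    change FactorsThru C (f ≫ g - f' ≫ g)
    rw [← Preadditive.sub_comp]
    exact ft_comp_right h g

/-- A morphism through `C` becomes zero when followed by a map from its target that kills
all of `C`. -/
lemma FactorsThru.comp_eq_zero_of_src {f : X ⟶ Y} (hf : FactorsThru C f) (g : Y ⟶ Z)
    (h : ∀ ⦃c : T⦄, C c → ∀ u : c ⟶ Z, u = 0) : f ≫ g = 0 := by
  obtain ⟨c, a, b, hc, rfl⟩ := hf
  rw [Category.assoc, h hc (b ≫ g), comp_zero]

lemma FactorsThru.eq_zero {f : X ⟶ Y} (hf : FactorsThru C f)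
    (h : ∀ ⦃c : T⦄, C c → ∀ u : c ⟶ Y, u = 0) : f = 0 := by
  simpa using hf.comp_eq_zero_of_src (𝟙 Y) h

end Ideal

/-! ### The perpendicular category -/

section Perpendicular

variable {C : T → Prop}

lemma summand_leftPerp {X Z : T} (h : IsSummand X Z)
    (hZ : leftPerp C Z) : leftPerp C X := by
  obtain ⟨s, r, hsr⟩ := h
  intro c hc f
  rw [← Category.id_comp f, ← hsr, Category.assoc, hZ hc (r ≫ f), comp_zero]

namespace PreClusterTilting

/-- If `a` is a left `C`-approximation of `X`, then the cone `Y` of `a` lies in `^⊥₁C`. -/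
lemma leftPerp_cone (hC : PreClusterTilting C) {X c Y : T} {a : X ⟶ c} {b : c ⟶ Y}
    {w : Y ⟶ X⟦(1 : ℤ)⟧} (H : Triangle.mk a b w ∈ distTriang T) (hc : C c)
    (ha : IsLeftApprox C a) : leftPerp C Y := by
  intro c' hc' f
  obtain ⟨v, rfl⟩ := tri_desc₃ H f (hC.rigid hc hc' _)
  obtain ⟨v, rfl⟩ := (shiftFunctor T (1 : ℤ)).map_surjective v
  obtain ⟨u, rfl⟩ := ha hc' v
  rw [Functor.map_comp, ← Category.assoc, tri_zero₃₁ H, zero_comp]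

/-- If `b` is a right `C`-approximation of `Y`, then its cocone `X` lies in `C^⊥₁`. -/
lemma rightPerp_cocone (hC : PreClusterTilting C) {X c Y : T} {a : X ⟶ c} {b : c ⟶ Y}
    {w : Y ⟶ X⟦(1 : ℤ)⟧} (H : Triangle.mk a b w ∈ distTriang T) (hc : C c)
    (hb : IsRightApprox C b) : rightPerp C X := by
  intro c' hc' f
  obtain ⟨v, rfl⟩ := tri_lift₁ H f (hC.rigid hc' hc _)
  obtain ⟨u, rfl⟩ := hb hc' v
  rw [Category.assoc, tri_zero₂₃ H, comp_zero]

lemma leftPerp_iff (hC : PreClusterTilting C) {X : T} : leftPerp C X ↔ rightPerp C X := by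
  rw [hC.perp_eq]

end PreClusterTilting

lemma FactorsThru.comp_eq_zero_of_rightPerp {X Y Z : T} {f : X ⟶ Y} (hf : FactorsThru C f)
    (hZ : rightPerp C Z) (g : Y ⟶ Z⟦(1 : ℤ)⟧) : f ≫ g = 0 :=
  hf.comp_eq_zero_of_src g fun _ hc u => hZ hc u

/-- A morphism through `C` induces zero on the extensions of an object `W` of `^⊥₁C`. -/
lemma FactorsThru.comp_shift_eq_zero {W X Y : T} {f : X ⟶ Y} (hf : FactorsThru C f)
    (hW : leftPerp C W) (g : W ⟶ X⟦(1 : ℤ)⟧) : g ≫ f⟦(1 : ℤ)⟧' = 0 := by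
  obtain ⟨c, a, b, hc, rfl⟩ := hf
  rw [Functor.map_comp, ← Category.assoc, hW hc (g ≫ a⟦(1 : ℤ)⟧'), zero_comp]

end Perpendicular

/-! ### The quotient by a cluster tilting subcategory is abelian -/

section Packaging

/-- The part of the axioms of an abelian category that has to be checked beyond the existence of
finite products, in element form: each morphism `f` has a cokernel `q` and a kernel `k`, a
monomorphism is a kernel of its cokernel and an epimorphism is a cokernel of its kernel. -/
lemma nonempty_abelian {A : Type*} [Category A] [Preadditive A] [HasFiniteProducts A]
    (hcok : ∀ {X Y : A} (f : X ⟶ Y), ∃ (Z : A) (q : Y ⟶ Z), f ≫ q = 0 ∧ Epi q ∧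
      (∀ {W : A} (g : Y ⟶ W), f ≫ g = 0 → ∃ l, q ≫ l = g) ∧
      (Mono f → ∀ {W : A} (g : W ⟶ Y), g ≫ q = 0 → ∃ l, l ≫ f = g))
    (hker : ∀ {X Y : A} (f : X ⟶ Y), ∃ (K : A) (k : K ⟶ X), k ≫ f = 0 ∧ Mono k ∧
      (∀ {W : A} (g : W ⟶ X), g ≫ f = 0 → ∃ l, l ≫ k = g) ∧
      (Epi f → ∀ {W : A} (g : X ⟶ W), k ≫ g = 0 → ∃ l, f ≫ l = g)) :
    Nonempty (Abelian A) := by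
  have hC : HasCokernels A := ⟨fun {X Y} f => by
    obtain ⟨Z, q, h0, he, hu, -⟩ := hcok f
    choose l hl using @hu
    exact ⟨⟨CokernelCofork.ofπ q h0, CokernelCofork.IsColimit.ofπ q h0 (fun g hg => l g hg)
      (fun g hg => hl g hg) (fun g hg m hm => by rw [← cancel_epi q, hm, hl])⟩⟩⟩
  have hK : HasKernels A := ⟨fun {X Y} f => by
    obtain ⟨K, k, h0, hm, hu, -⟩ := hker f
    choose l hl using @hu
    exact ⟨⟨KernelFork.ofι k h0, KernelFork.IsLimit.ofι k h0 (fun g hg => l g hg)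
      (fun g hg => hl g hg) (fun g hg m hm => by rw [← cancel_mono k, hm, hl])⟩⟩⟩
  have hM : IsNormalMonoCategory A := ⟨fun {X Y} f hf => by
    obtain ⟨Z, q, h0, -, -, hu⟩ := hcok f
    have hu' : ∀ (W : A) (g : W ⟶ Y), g ≫ q = 0 → ∃ l, l ≫ f = g := fun _ g => hu hf g
    choose l hl using hu'
    refine ⟨⟨Z, q, h0, KernelFork.IsLimit.ofι f h0 (fun g hg => l _ g hg)
      (fun g hg => hl _ g hg) ?_⟩⟩
    intro W g hg m hm
    rw [← cancel_mono f, hm, hl]⟩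
  have hE : IsNormalEpiCategory A := ⟨fun {X Y} f hf => by
    obtain ⟨K, k, h0, -, -, hu⟩ := hker f
    have hu' : ∀ (W : A) (g : X ⟶ W), k ≫ g = 0 → ∃ l, f ≫ l = g := fun _ g => hu hf g
    choose l hl using hu'
    refine ⟨⟨K, k, h0, CokernelCofork.IsColimit.ofπ f h0 (fun g hg => l _ g hg)
      (fun g hg => hl _ g hg) ?_⟩⟩
    intro W g hg m hm
    rw [← cancel_epi f, hm, hl]⟩
  exact ⟨{ }⟩

end Packaging

section Forward

variable {C : T → Prop}

/-- Every object has a coresolution of length one by objects of `C`. -/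
lemma ClusterTilting.exists_right_triangle (hC : ClusterTilting C) (X : T) :
    ∃ (c₀ c₁ : T) (a : X ⟶ c₀) (b : c₀ ⟶ c₁) (d : c₁ ⟶ X⟦(1 : ℤ)⟧),
      C c₀ ∧ C c₁ ∧ Triangle.mk a b d ∈ distTriang T := by
  obtain ⟨c₀, a, hc₀, ha⟩ := hC.covariantlyFinite X
  obtain ⟨c₁, b, d, H⟩ := distinguished_cocone_triangle a
  refine ⟨c₀, c₁, a, b, d, hc₀, ?_, H⟩
  rw [hC.eq_leftPerp]
  exact hC.toPreClusterTilting.leftPerp_cone H hc₀ ha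

/-- Every object has a resolution of length one by objects of `C`. -/
lemma ClusterTilting.exists_left_triangle (hC : ClusterTilting C) (Y : T) :
    ∃ (c₁ c₀ : T) (a : c₁ ⟶ c₀) (b : c₀ ⟶ Y) (e : Y ⟶ c₁⟦(1 : ℤ)⟧),
      C c₁ ∧ C c₀ ∧ Triangle.mk a b e ∈ distTriang T := by
  obtain ⟨c₀, b, hc₀, hb⟩ := hC.contravariantlyFinite Y
  obtain ⟨c₁, a, e, H⟩ := distinguished_cocone_triangle₁ b
  refine ⟨c₁, c₀, a, b, e, ?_, hc₀, H⟩
  rw [hC.eq_rightPerp]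
  exact hC.toPreClusterTilting.rightPerp_cocone H hc₀ hb

lemma ft_of_comp_shift {X W c₀ c₁ : T} {a : X ⟶ c₀} {b : c₀ ⟶ c₁} {d : c₁ ⟶ X⟦(1 : ℤ)⟧}
    (H : Triangle.mk a b d ∈ distTriang T) (hc₀ : C c₀) {g : X ⟶ W}
    (hg : d ≫ g⟦(1 : ℤ)⟧' = 0) : FactorsThru C g := by
  obtain ⟨v, rfl⟩ := tri_desc₁ H g hg
  exact ⟨c₀, a, v, hc₀, rfl⟩

lemma ft_of_comp {Y W c₀ c₁ : T} {a : c₁ ⟶ c₀} {b : c₀ ⟶ Y} {e : Y ⟶ c₁⟦(1 : ℤ)⟧}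
    (H : Triangle.mk a b e ∈ distTriang T) (hc₀ : C c₀) {g : W ⟶ Y}
    (hg : g ≫ e = 0) : FactorsThru C g := by
  obtain ⟨v, rfl⟩ := tri_lift₃ H g hg
  exact ⟨c₀, v, b, hc₀, rfl⟩

lemma ClusterTilting.leftPerp_of (hC : ClusterTilting C) {c : T} (hc : C c) : leftPerp C c :=
  fun _ hd => hC.rigid hc hd

lemma ClusterTilting.rightPerp_of (hC : ClusterTilting C) {c : T} (hc : C c) : rightPerp C c :=
  fun _ hc' => hC.rigid hc' hc

/-- If `f` is a monomorphism in `T/C`, then `f⟦1⟧` is injective on morphisms from `C`: if `f⟦1⟧`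
kills `x`, then `f` kills `x⟦-1⟧`, which therefore factors through `C` and is zero by rigidity. -/
lemma ClusterTilting.eq_zero_of_mono (hC : ClusterTilting C) {X Y : T} {f : X ⟶ Y}
    (hf : ∀ {W : T} (g : W ⟶ X), FactorsThru C (g ≫ f) → FactorsThru C g)
    {c : T} (hc : C c) (x : c ⟶ X⟦(1 : ℤ)⟧) (hx : x ≫ f⟦(1 : ℤ)⟧' = 0) : x = 0 := by
  let j : (c⟦(-1 : ℤ)⟧)⟦(1 : ℤ)⟧ ≅ c :=
    (shiftFunctorCompIsoId T (-1 : ℤ) 1 (by norm_num)).app c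
  obtain ⟨n, hn⟩ := (shiftFunctor T (1 : ℤ)).map_surjective (j.hom ≫ x)
  have h1 : n ≫ f = 0 := by
    rw [← shift_map_eq_zero, Functor.map_comp, hn, Category.assoc, hx, comp_zero]
  have h2 : FactorsThru C n := hf n (by rw [h1]; exact hC.ft_zero)
  have h3 : j.inv ≫ n⟦(1 : ℤ)⟧' = 0 := h2.comp_shift_eq_zero (hC.leftPerp_of hc) _
  rw [hn, Iso.inv_hom_id_assoc] at h3
  exact h3

/-- Existence of cokernels in `T/C`. With `c₀ ⟶ c₁ ⟶ X⟦1⟧` obtained from a left approximation of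
`X`, the cokernel of `f` is the cone of the composite `c₁⟦-1⟧ ⟶ X ⟶ Y`. The last clause says
that a monomorphism is a kernel of its cokernel. -/
lemma ClusterTilting.exists_cokernel (hC : ClusterTilting C) {X Y : T} (f : X ⟶ Y) :
    ∃ (Z : T) (q : Y ⟶ Z), FactorsThru C (f ≫ q) ∧
      (∀ {W : T} (g : Z ⟶ W), FactorsThru C (q ≫ g) → FactorsThru C g) ∧
      (∀ {W : T} (g : Y ⟶ W), FactorsThru C (f ≫ g) → ∃ l, q ≫ l = g) ∧
      ((∀ {W : T} (g : W ⟶ X), FactorsThru C (g ≫ f) → FactorsThru C g) →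
        ∀ {W : T} (g : W ⟶ Y), FactorsThru C (g ≫ q) →
          ∃ l : W ⟶ X, FactorsThru C (l ≫ f - g)) := by
  obtain ⟨c₀, c₁, a, b, d, hc₀, hc₁, H⟩ := hC.exists_right_triangle X
  obtain ⟨Z, q, r, HZ⟩ := distinguished_cocone_triangle₂ (d ≫ f⟦(1 : ℤ)⟧')
  refine ⟨Z, q, ?_, ?_, ?_, ?_⟩
  · apply ft_of_comp_shift H hc₀
    rw [Functor.map_comp, ← Category.assoc]
    exact tri_zero₃₁ HZ
  · intro W g hg
    obtain ⟨c₀', c₁', a', b', d', hc₀', hc₁', H'⟩ := hC.exists_right_triangle Z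
    apply ft_of_comp_shift H' hc₀'
    obtain ⟨x, rfl⟩ := tri_lift₂_shift HZ d' (hC.rigid hc₁' hc₁ _)
    rw [Category.assoc, ← Functor.map_comp]
    exact hg.comp_shift_eq_zero (hC.leftPerp_of hc₁') x
  · intro W g hg
    obtain ⟨v, rfl⟩ := tri_desc₁ HZ g (by
      rw [Category.assoc, ← Functor.map_comp]
      exact hg.comp_shift_eq_zero (hC.leftPerp_of hc₁) d)
    exact ⟨v, rfl⟩
  · intro hf W g hg
    obtain ⟨c₀', c₁', a', b', d', hc₀', hc₁', H'⟩ := hC.exists_right_triangle W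
    obtain ⟨v, hv⟩ := tri_lift₁ HZ (d' ≫ g⟦(1 : ℤ)⟧') (by
      rw [Category.assoc, ← Functor.map_comp]
      exact hg.comp_shift_eq_zero (hC.leftPerp_of hc₁') d')
    have h0 : b' ≫ v ≫ d = 0 := by
      apply hC.eq_zero_of_mono hf hc₀'
      rw [Category.assoc, Category.assoc, ← hv, ← Category.assoc, tri_zero₂₃ H', zero_comp]
    obtain ⟨l, hl⟩ := tri_desc₃ H' (v ≫ d) h0
    obtain ⟨l, rfl⟩ := (shiftFunctor T (1 : ℤ)).map_surjective l
    refine ⟨l, ft_of_comp_shift H' hc₀' ?_⟩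
    rw [Functor.map_sub, Preadditive.comp_sub, Functor.map_comp, ← Category.assoc, ← hl, hv,
      Category.assoc, sub_self]

/-- Existence of kernels in `T/C`: with `Y ⟶ c₁⟦1⟧` obtained from a right approximation of `Y`,
the kernel of `f` is the cocone of the composite `X ⟶ Y ⟶ c₁⟦1⟧`. The last clause says
that an epimorphism is a cokernel of its kernel. -/
lemma ClusterTilting.exists_kernel (hC : ClusterTilting C) {X Y : T} (f : X ⟶ Y) :
    ∃ (K : T) (k : K ⟶ X), FactorsThru C (k ≫ f) ∧
      (∀ {W : T} (g : W ⟶ K), FactorsThru C (g ≫ k) → FactorsThru C g) ∧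
      (∀ {W : T} (g : W ⟶ X), FactorsThru C (g ≫ f) → ∃ l, l ≫ k = g) ∧
      ((∀ {W : T} (g : Y ⟶ W), FactorsThru C (f ≫ g) → FactorsThru C g) →
        ∀ {W : T} (g : X ⟶ W), FactorsThru C (k ≫ g) →
          ∃ l : Y ⟶ W, FactorsThru C (f ≫ l - g)) := by
  obtain ⟨c₁, c₀, a, b, e, hc₁, hc₀, H⟩ := hC.exists_left_triangle Y
  obtain ⟨K, k, h, HK⟩ := distinguished_cocone_triangle₁ (f ≫ e)
  refine ⟨K, k, ?_, ?_, ?_, ?_⟩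
  · apply ft_of_comp H hc₀
    rw [Category.assoc]
    exact tri_zero₁₂ HK
  · intro W g hg
    obtain ⟨c₁', c₀', a', b', e', hc₁', hc₀', H'⟩ := hC.exists_left_triangle K
    apply ft_of_comp H' hc₀'
    have h0 : h ≫ e'⟦(1 : ℤ)⟧' = 0 := by
      obtain ⟨m, hm⟩ := (shiftFunctor T (1 : ℤ)).map_surjective (h ≫ e'⟦(1 : ℤ)⟧')
      rw [← hm, hC.rigid hc₁ hc₁' m, Functor.map_zero]
    obtain ⟨v, rfl⟩ := tri_desc₁ HK e' h0
    rw [← Category.assoc]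
    exact hg.comp_eq_zero_of_rightPerp (hC.rightPerp_of hc₁') v
  · intro W g hg
    obtain ⟨v, rfl⟩ := tri_lift₂ HK g (by
      rw [← Category.assoc]
      exact hg.comp_eq_zero_of_rightPerp (hC.rightPerp_of hc₁) e)
    exact ⟨v, rfl⟩
  · intro hf W g hg
    obtain ⟨c₁', c₀', a', b', e', hc₁', hc₀', H'⟩ := hC.exists_left_triangle W
    obtain ⟨v, hv⟩ := tri_desc₂ HK (g ≫ e') (by
      rw [← Category.assoc]
      exact hg.comp_eq_zero_of_rightPerp (hC.rightPerp_of hc₁') e')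
    have h0 : (e ≫ v) ≫ a'⟦(1 : ℤ)⟧' = 0 := by
      have h1 : f ≫ (e ≫ v) ≫ a'⟦(1 : ℤ)⟧' = 0 := by
        rw [← Category.assoc, ← Category.assoc, ← hv, Category.assoc, tri_zero₃₁ H', comp_zero]
      have h2 := hf _ (by rw [h1]; exact hC.ft_zero)
      exact h2.eq_zero fun c hc u => hC.rigid hc hc₀' u
    obtain ⟨l, hl⟩ := tri_lift₁ H' (e ≫ v) h0
    refine ⟨l, ft_of_comp H' hc₀' ?_⟩
    rw [Preadditive.sub_comp, Category.assoc, ← hl, hv, Category.assoc, sub_self]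

lemma ClusterTilting.isAbelian (hC : ClusterTilting C) : IsAbelian (QuotCat C) := by
  have := hC.congruence
  have hr : ∀ ⦃X Y : T⦄ (f₁ f₂ g₁ g₂ : X ⟶ Y), quotRel C f₁ f₂ → quotRel C g₁ g₂ →
      quotRel C (f₁ + g₁) (f₂ + g₂) := by
    intro X Y f₁ f₂ g₁ g₂ h h'
    change FactorsThru C _
    rw [add_sub_add_comm]
    exact hC.ft_add h h'
  let := Quotient.preadditive (quotRel C) hr
  let F := Quotient.functor (quotRel C)
  have : F.Additive := Quotient.functor_additive (quotRel C) hr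
  have : HasFiniteProducts (QuotCat C) := Functor.hasFiniteProducts_of_additive_of_essSurj F
  have h0 : ∀ {X Y : T} (f : X ⟶ Y), F.map f = 0 ↔ FactorsThru C f := by
    intro X Y f
    rw [← F.map_zero, Quotient.functor_map_eq_iff]
    change FactorsThru C (f - 0) ↔ _
    rw [sub_zero]
  apply nonempty_abelian
  · rintro ⟨X⟩ ⟨Y⟩ f
    obtain ⟨f, rfl⟩ := F.map_surjective (X := X) (Y := Y) f
    obtain ⟨Z, q, h1, h2, h3, h4⟩ := hC.exists_cokernel f
    refine ⟨F.obj Z, F.map q, by rw [← F.map_comp, h0]; exact h1, ?_, ?_, ?_⟩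
    · refine Preadditive.epi_of_cancel_zero _ ?_
      rintro ⟨W⟩ g hg
      obtain ⟨g, rfl⟩ := F.map_surjective (X := Z) (Y := W) g
      rw [← F.map_comp, h0] at hg
      exact (h0 _).2 (h2 g hg)
    · rintro ⟨W⟩ g hg
      obtain ⟨g, rfl⟩ := F.map_surjective (X := Y) (Y := W) g
      rw [← F.map_comp, h0] at hg
      obtain ⟨l, rfl⟩ := h3 g hg
      exact ⟨F.map l, (F.map_comp _ _).symm⟩
    · rintro hm ⟨W⟩ g hg
      obtain ⟨g, rfl⟩ := F.map_surjective (X := W) (Y := Y) g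
      rw [← F.map_comp, h0] at hg
      obtain ⟨l, hl⟩ := h4 (fun g hg => by
        rw [← h0, F.map_comp] at hg
        exact (h0 _).1 (Preadditive.mono_iff_cancel_zero _ |>.1 hm _ _ hg)) g hg
      refine ⟨F.map l, ?_⟩
      rwa [← h0, F.map_sub, sub_eq_zero, F.map_comp] at hl
  · rintro ⟨X⟩ ⟨Y⟩ f
    obtain ⟨f, rfl⟩ := F.map_surjective (X := X) (Y := Y) f
    obtain ⟨K, k, h1, h2, h3, h4⟩ := hC.exists_kernel f
    refine ⟨F.obj K, F.map k, by rw [← F.map_comp, h0]; exact h1, ?_, ?_, ?_⟩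
    · refine Preadditive.mono_of_cancel_zero _ ?_
      rintro ⟨W⟩ g hg
      obtain ⟨g, rfl⟩ := F.map_surjective (X := W) (Y := K) g
      rw [← F.map_comp, h0] at hg
      exact (h0 _).2 (h2 g hg)
    · rintro ⟨W⟩ g hg
      obtain ⟨g, rfl⟩ := F.map_surjective (X := W) (Y := X) g
      rw [← F.map_comp, h0] at hg
      obtain ⟨l, rfl⟩ := h3 g hg
      exact ⟨F.map l, (F.map_comp _ _).symm⟩
    · rintro hm ⟨W⟩ g hg
      obtain ⟨g, rfl⟩ := F.map_surjective (X := X) (Y := W) g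
      rw [← F.map_comp, h0] at hg
      obtain ⟨l, hl⟩ := h4 (fun g hg => by
        rw [← h0, F.map_comp] at hg
        exact (h0 _).1 (Preadditive.epi_iff_cancel_zero _ |>.1 hm _ _ hg)) g hg
      refine ⟨F.map l, ?_⟩
      rwa [← h0, F.map_sub, sub_eq_zero, F.map_comp] at hl

end Forward

/-! ### Consequences of the existence of cokernels in `T/C` -/

section Backward

variable {C : T → Prop}

/-- The quotient `T/C` has kernels, spelled out on representatives in `T`. -/
def HasQuotKernels (C : T → Prop) : Prop :=
  ∀ ⦃X Y : T⦄ (f : X ⟶ Y), ∃ (K : T) (k : K ⟶ X), FactorsThru C (k ≫ f) ∧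
    (∀ ⦃W : T⦄ (g : W ⟶ K), FactorsThru C (g ≫ k) → FactorsThru C g) ∧
    ∀ ⦃W : T⦄ (g : W ⟶ X), FactorsThru C (g ≫ f) → ∃ l : W ⟶ K, FactorsThru C (l ≫ k - g)

/-- The quotient `T/C` has cokernels, spelled out on representatives in `T`. -/
def HasQuotCokernels (C : T → Prop) : Prop :=
  ∀ ⦃X Y : T⦄ (f : X ⟶ Y), ∃ (Q : T) (q : Y ⟶ Q), FactorsThru C (f ≫ q) ∧
    (∀ ⦃W : T⦄ (g : Q ⟶ W), FactorsThru C (q ≫ g) → FactorsThru C g) ∧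
    ∀ ⦃W : T⦄ (g : Y ⟶ W), FactorsThru C (f ≫ g) → ∃ l : Q ⟶ W, FactorsThru C (q ≫ l - g)

/-- The additive structure of an abelian structure on `T/C` is not assumed to be the one induced
from `T`, but the zero morphisms agree since they are the morphisms through a zero object. -/
lemma PreClusterTilting.hasQuotKernels_and_cokernels (hC : PreClusterTilting C)
    (hA : IsAbelian (QuotCat C)) : HasQuotKernels C ∧ HasQuotCokernels C := by
  have := hC.congruence
  obtain ⟨hA⟩ := hA
  let F := Quotient.functor (quotRel C)
  obtain ⟨O, hO⟩ := HasZeroObject.zero (C := T)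
  have hz : IsZero (F.obj O) := by
    refine ⟨fun Y => ⟨⟨⟨F.map (0 : O ⟶ Y.as)⟩, fun f => ?_⟩⟩,
      fun Y => ⟨⟨⟨F.map (0 : Y.as ⟶ O)⟩, fun f => ?_⟩⟩⟩
    · obtain ⟨f, rfl⟩ := F.map_surjective (X := O) (Y := Y.as) f
      exact congrArg F.map (hO.eq_of_src _ _)
    · obtain ⟨f, rfl⟩ := F.map_surjective (X := Y.as) (Y := O) f
      exact congrArg F.map (hO.eq_of_tgt _ _)
  have hF0 : ∀ X Y : T, F.map (0 : X ⟶ Y) = 0 := by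
    intro X Y
    have h1 : F.map (0 : X ⟶ Y) = F.map (0 : X ⟶ O) ≫ F.map (0 : O ⟶ Y) := by
      rw [← F.map_comp, zero_comp]
    rw [h1, hz.eq_of_src (F.map (0 : O ⟶ Y)) 0, comp_zero]
  have hF : ∀ {X Y : T} (f g : X ⟶ Y), F.map f = F.map g ↔ FactorsThru C (f - g) :=
    fun f g => Quotient.functor_map_eq_iff (quotRel C) f g
  have h0 : ∀ {X Y : T} (f : X ⟶ Y), F.map f = 0 ↔ FactorsThru C f := by
    intro X Y f
    rw [← hF0, hF, sub_zero]
  constructor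
  · intro X Y f
    obtain ⟨k, hk⟩ := F.map_surjective (X := (kernel (F.map f)).as) (Y := X)
      (kernel.ι (F.map f))
    refine ⟨_, k, ?_, fun W g hg => ?_, fun W g hg => ?_⟩
    · rw [← h0, F.map_comp, hk]
      exact kernel.condition _
    · rw [← h0, F.map_comp, hk] at hg
      rw [← h0]
      exact zero_of_comp_mono (kernel.ι (F.map f)) hg
    · rw [← h0, F.map_comp] at hg
      obtain ⟨l, hl⟩ := F.map_surjective (X := W) (Y := (kernel (F.map f)).as)
        (kernel.lift (F.map f) (F.map g) hg)
      refine ⟨l, ?_⟩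
      rw [← hF, F.map_comp, hk, hl]
      exact kernel.lift_ι _ _ _
  · intro X Y f
    obtain ⟨q, hq⟩ := F.map_surjective (X := Y) (Y := (cokernel (F.map f)).as)
      (cokernel.π (F.map f))
    refine ⟨_, q, ?_, fun W g hg => ?_, fun W g hg => ?_⟩
    · rw [← h0, F.map_comp, hq]
      exact cokernel.condition _
    · rw [← h0, F.map_comp, hq] at hg
      rw [← h0]
      exact zero_of_epi_comp (cokernel.π (F.map f)) hg
    · rw [← h0, F.map_comp] at hg
      obtain ⟨l, hl⟩ := F.map_surjective (X := (cokernel (F.map f)).as) (Y := W)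
        (cokernel.desc (F.map f) (F.map g) hg)
      refine ⟨l, ?_⟩
      rw [← hF, F.map_comp, hq, hl]
      exact cokernel.π_desc _ _ _

lemma isIso_or_isIso_sub {X : T} [IsLocalRing (End X)] (φ : X ⟶ X) :
    IsIso φ ∨ IsIso (𝟙 X - φ) := by
  have h : (show End X from φ) + (show End X from 𝟙 X - φ) = 1 := add_sub_cancel φ (𝟙 X)
  rcases IsLocalRing.isUnit_or_isUnit_of_add_one h with h | h
  · exact Or.inl ((isUnit_iff_isIso _).1 h)
  · exact Or.inr ((isUnit_iff_isIso _).1 h)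

lemma not_isZero_of_local {X : T} [IsLocalRing (End X)] : ¬ IsZero X := fun h =>
  one_ne_zero (α := End X) (h.eq_of_src _ _)

/-- A split monomorphism from a nonzero object to an object with local endomorphism ring is
invertible, with inverse its retraction. -/
lemma isIso_of_splitMono {X Y : T} [IsLocalRing (End Y)] (hX : ¬ IsZero X) {s : X ⟶ Y}
    {r : Y ⟶ X} (h : s ≫ r = 𝟙 X) : r ≫ s = 𝟙 Y := by
  have hid : (r ≫ s) ≫ (r ≫ s) = r ≫ s := by
    rw [Category.assoc, ← Category.assoc s, h, Category.id_comp]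
  rcases isIso_or_isIso_sub (r ≫ s) with hi | hi
  · rw [← cancel_epi (r ≫ s), hid, Category.comp_id]
  · exfalso
    have h1 : r ≫ s = 0 := by
      rw [← cancel_epi (𝟙 Y - r ≫ s), comp_zero, Preadditive.sub_comp, hid, Category.id_comp,
        sub_self]
    apply hX
    rw [IsZero.iff_id_eq_zero, ← h, ← Category.comp_id (s ≫ r), ← h]
    simp only [Category.assoc]
    rw [← Category.assoc r, h1, zero_comp, comp_zero]

/-- An indecomposable object `X` of `^⊥₁C` outside `C` receives no nonzero morphism from `C`.

Let `β : c₁ ⟶ X` and `a : X ⟶ c₀` be a right and a left approximation. The octahedral axiom relates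
the cone `B` of `β`, the cone `Y` of `a` and the cone `P` of `β ≫ a` by morphisms `X ⟶ B ⟶ P ⟶ Y`.
In `T/C` the second is a weak cokernel of the first, and the third a weak cokernel of the second.
Comparing `P` with the genuine cokernel of `X ⟶ B` shows that `P ⟶ Y` vanishes in `T/C` and that
`B ⟶ P` is an epimorphism there. The former gives `β ≫ a = 0` because `X` is not a summand of `c₀`,
and then the latter gives `β = 0`. -/
lemma hom_from_eq_zero [IsTriangulated T] (hC : PreClusterTilting C) (hQ : HasQuotCokernels C)
    {X : T} [IsLocalRing (End X)] (hXC : ¬ C X) (hX : leftPerp C X) :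
    ∀ ⦃c : T⦄, C c → ∀ u : c ⟶ X, u = 0 := by
  obtain ⟨c₀, a, hc₀, ha⟩ := hC.covariantlyFinite X
  obtain ⟨Y, b, w, HY⟩ := distinguished_cocone_triangle a
  obtain ⟨c₁, β, hc₁, hβ⟩ := hC.contravariantlyFinite X
  obtain ⟨B, i, h, HB⟩ := distinguished_cocone_triangle β
  obtain ⟨P, z, h', HP⟩ := distinguished_cocone_triangle (β ≫ a)
  obtain ⟨p, π, comm₁, comm₂, comm₃, comm₄, HO⟩ := Triangulated.someOctahedron rfl HB HY HP
  have hYl : leftPerp C Y := hC.leftPerp_cone HY hc₀ ha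
  have hXr : rightPerp C X := hC.leftPerp_iff.1 hX
  -- `p` is a weak cokernel of `i` in `T/C`
  have weak_p : ∀ {W : T} (g : B ⟶ W), FactorsThru C (i ≫ g) → ∃ t, p ≫ t = g := by
    rintro W g ⟨c, x, y, hc, hxy⟩
    obtain ⟨m', rfl⟩ := ha hc x
    obtain ⟨n, hn⟩ := tri_desc₂ HP (m' ≫ y) (by
      simp only [Category.assoc] at hxy ⊢
      rw [hxy, ← Category.assoc, tri_zero₁₂ HB, zero_comp])
    obtain ⟨j, hj⟩ := tri_desc₃ HB (p ≫ n - g) (by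
      rw [Preadditive.comp_sub, ← Category.assoc, comm₁, Category.assoc, ← hn, ← hxy,
        Category.assoc, sub_self])
    refine ⟨n - h' ≫ j, ?_⟩
    rw [Preadditive.comp_sub, ← Category.assoc, comm₂, ← hj, sub_sub_cancel]
  -- `π` is a weak cokernel of `p` in `T/C`
  have weak_π : ∀ {W : T} (g : P ⟶ W), FactorsThru C (p ≫ g) →
      ∃ k : Y ⟶ W, FactorsThru C (g - π ≫ k) := by
    rintro W g ⟨c, x, y, hc, hxy⟩
    obtain ⟨x', rfl⟩ := tri_desc₁ HO x (hYl hc _)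
    obtain ⟨k, hk⟩ := tri_desc₂ HO (g - x' ≫ y) (by
      rw [Preadditive.comp_sub, ← hxy, Category.assoc, sub_self])
    exact ⟨k, c, x', y, hc, by rw [← hk, sub_sub_cancel]⟩
  -- an endomorphism of `Y` killed by the connecting map of the octahedron is zero in `T/C`
  have ft_end : ∀ e : Y ⟶ Y, e ≫ w ≫ i⟦(1 : ℤ)⟧' = 0 → FactorsThru C e := by
    intro e he
    obtain ⟨v, hv⟩ := tri_lift₂_shift HB (e ≫ w) (by rw [Category.assoc, he])
    rw [hYl hc₁ v, zero_comp] at hv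
    obtain ⟨x, rfl⟩ := tri_lift₃ HY e hv
    exact ⟨c₀, x, b, hc₀, rfl⟩
  obtain ⟨Q, q, hq₁, hq₂, hq₃⟩ := hQ i
  -- `π` vanishes in `T/C`: on the one hand `t ≫ π` does, on the other `𝟙 - s ≫ t` factors through
  -- `π`, and the resulting endomorphism `k ≫ π` of `Y` vanishes
  have hπ : FactorsThru C π := by
    obtain ⟨t, ht⟩ := hq₃ p (by
      rw [comm₁]
      exact ⟨c₀, a, z, hc₀, rfl⟩)
    obtain ⟨s, hs⟩ := weak_p q hq₁
    obtain ⟨k, hk⟩ := weak_π (𝟙 P - s ≫ t) (by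
      have := ft_neg ht
      rwa [neg_sub, ← hs, Category.assoc, ← Category.comp_id p, Category.assoc,
        ← Preadditive.comp_sub, Category.id_comp] at this)
    have htπ : FactorsThru C (t ≫ π) := hq₂ _ (by
      have := ft_comp_right ht π
      rwa [Preadditive.sub_comp, tri_zero₁₂ HO, sub_zero, Category.assoc] at this)
    have he : FactorsThru C (k ≫ π) := ft_end _ (by
      rw [Category.assoc, tri_zero₂₃ HO, comp_zero])
    have e₁ : π = (𝟙 P - s ≫ t - π ≫ k) ≫ π + s ≫ (t ≫ π) + π ≫ (k ≫ π) := by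
      simp only [Preadditive.sub_comp, Category.id_comp, Category.assoc]
      abel
    rw [e₁]
    exact hC.ft_add (hC.ft_add (ft_comp_right hk π) (ft_comp_left htπ s)) (ft_comp_left he π)
  -- hence the composite `β ≫ a` of the two approximations vanishes
  have hγ : β ≫ a = 0 := by
    obtain ⟨θ, hθ⟩ := tri_lift₃ HY π (hπ.comp_eq_zero_of_rightPerp hXr w)
    obtain ⟨m, hm⟩ := tri_lift₂ HY (𝟙 c₀ - z ≫ θ) (by
      rw [Preadditive.sub_comp, Category.assoc, ← hθ, comm₃, Category.id_comp, sub_self])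
    -- `β ≫ a ≫ m` is fixed by the endomorphism `a ≫ m` of `X`, which is not invertible
    have h₁ : β ≫ a = (β ≫ a) ≫ m ≫ a := by
      rw [← hm, Preadditive.comp_sub, ← Category.assoc _ z, tri_zero₁₂ HP, zero_comp, sub_zero,
        Category.comp_id]
    rcases isIso_or_isIso_sub (a ≫ m) with hi | hi
    · refine absurd (hC.summandClosed ⟨a, m ≫ inv (a ≫ m), ?_⟩ hc₀) hXC
      rw [← Category.assoc, IsIso.hom_inv_id]
    · have h₂ : β ≫ a ≫ m = 0 := by
        rw [← cancel_mono (𝟙 X - a ≫ m), zero_comp, Preadditive.comp_sub, Category.comp_id]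
        conv_lhs => enter [1]; rw [← Category.assoc, h₁]
        simp only [Category.assoc, sub_self]
      rw [h₁, Category.assoc, ← Category.assoc a, ← Category.assoc, h₂, zero_comp]
  -- and `p` is an epimorphism in `T/C`, which gives `h' ≫ β⟦1⟧' = 0` with `h'` a split epimorphism
  have h₃ : h' ≫ β⟦(1 : ℤ)⟧' = 0 := by
    obtain ⟨k, hk⟩ := weak_π (h' ≫ β⟦(1 : ℤ)⟧') (by
      rw [← Category.assoc, comm₂, tri_zero₃₁ HB]
      exact hC.ft_zero)
    have := hC.ft_add hk (ft_comp_right hπ k)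
    rw [sub_add_cancel] at this
    exact this.eq_zero fun _ hc u => hXr hc u
  have hβ0 : β = 0 := by
    obtain ⟨s, hs⟩ := tri_lift₁ HP (𝟙 _) (by rw [hγ, Functor.map_zero, comp_zero])
    rw [← shift_map_eq_zero, ← Category.id_comp (β⟦(1 : ℤ)⟧'), hs, Category.assoc, h₃, comp_zero]
  intro c hc u
  obtain ⟨v, rfl⟩ := hβ hc u
  rw [hβ0, comp_zero]

end Backward

/-! ### Krull–Schmidt arguments -/

section KrullSchmidt

/-- Splitting off the first summand of a finite direct sum. -/
noncomputable def biproductSuccIso {n : ℕ} (f : Fin (n + 1) → T) :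
    (⨁ f) ≅ f 0 ⊞ ⨁ (fun i : Fin n => f i.succ) where
  hom := biprod.lift (biproduct.π f 0) (biproduct.lift fun i => biproduct.π f i.succ)
  inv := biprod.desc (biproduct.ι f 0) (biproduct.desc fun i => biproduct.ι f i.succ)
  hom_inv_id := by
    rw [biprod.lift_desc, biproduct.lift_desc, ← biproduct.total, Fin.sum_univ_succ]
  inv_hom_id := by
    ext
    · simp
    · simp [biproduct.ι_π_ne f (Fin.succ_ne_zero _).symm]
    · simp [biproduct.ι_π_ne f (Fin.succ_ne_zero _)]
    · rename_i i j
      by_cases h : i = j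
      · subst h; simp
      · simp [biproduct.ι_π_ne f (fun h' => h (Fin.succ_injective _ h')),
          biproduct.ι_π_ne (fun i : Fin n => f i.succ) h]

/-- In a Krull–Schmidt category a property of objects can be checked on objects with local
endomorphism ring, provided that it is additive. -/
lemma IsKrullSchmidt.induction (hKS : IsKrullSchmidt (T := T)) {P : T → Prop}
    (hiso : ∀ ⦃X Y : T⦄, (X ≅ Y) → P X → P Y) (h0 : ∀ ⦃X : T⦄, IsZero X → P X)
    (hadd : ∀ ⦃X Y : T⦄, P X → P Y → P (X ⊞ Y))
    (hloc : ∀ ⦃X : T⦄, IsLocalRing (End X) → P X) (X : T) : P X := by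
  obtain ⟨n, f, ⟨e⟩, hf⟩ := hKS X
  refine hiso e.symm ?_
  clear e
  induction n with
  | zero =>
    refine h0 ((IsZero.iff_id_eq_zero _).2 (biproduct.hom_ext _ _ fun i => i.elim0))
  | succ n ih => exact hiso (biproductSuccIso f).symm (hadd (hloc (hf 0)) (ih _ fun i => hf _))

lemma IsSummand.trans {X Y Z : T} (h : IsSummand X Y) (h' : IsSummand Y Z) : IsSummand X Z := by
  obtain ⟨s, r, h⟩ := h
  obtain ⟨s', r', h'⟩ := h'
  exact ⟨s ≫ s', r' ≫ r, by rw [Category.assoc, ← Category.assoc s', h', Category.id_comp, h]⟩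

lemma isSummand_of_iso {X Y : T} (e : X ≅ Y) : IsSummand X Y := ⟨e.hom, e.inv, e.hom_inv_id⟩

lemma isSummand_biprod_left (X Y : T) : IsSummand X (X ⊞ Y) := ⟨biprod.inl, biprod.fst, by simp⟩

lemma isSummand_biprod_right (X Y : T) : IsSummand Y (X ⊞ Y) := ⟨biprod.inr, biprod.snd, by simp⟩

lemma SummandClosed.isoClosed {P : T → Prop} (h : SummandClosed P) : IsoClosed P :=
  fun _ _ e hX => h (isSummand_of_iso e.symm) hX

/-- An object outside `C` has an indecomposable summand outside `C`. -/
lemma exists_local_summand {C : T → Prop} (hKS : IsKrullSchmidt (T := T))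
    (hC : PreClusterTilting C) (Z : T) :
    C Z ∨ ∃ F : T, IsLocalRing (End F) ∧ ¬ C F ∧ IsSummand F Z := by
  induction Z using hKS.induction with
  | hiso e h =>
    rcases h with h | ⟨F, hF, hFC, hFX⟩
    · exact Or.inl (hC.summandClosed.isoClosed e h)
    · exact Or.inr ⟨F, hF, hFC, hFX.trans (isSummand_of_iso e)⟩
  | h0 h => exact Or.inl (hC.of_isZero h)
  | @hadd X Y hX hY =>
    rcases hX with hX | ⟨F, hF, hFC, hFX⟩
    · rcases hY with hY | ⟨F, hF, hFC, hFY⟩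
      · exact Or.inl (hC.sumClosed hX hY)
      · exact Or.inr ⟨F, hF, hFC, hFY.trans (isSummand_biprod_right X Y)⟩
    · exact Or.inr ⟨F, hF, hFC, hFX.trans (isSummand_biprod_left X Y)⟩
  | @hloc X hX =>
    by_cases h : C X
    · exact Or.inl h
    · exact Or.inr ⟨X, hX, h, 𝟙 X, 𝟙 X, by simp⟩

lemma isLocalRing_end_shift {X : T} [IsLocalRing (End X)] :
    IsLocalRing (End (X⟦(1 : ℤ)⟧)) := by
  have : Nontrivial (End (X⟦(1 : ℤ)⟧)) := by
    refine ⟨𝟙 _, 0, fun h => one_ne_zero (α := End X) ?_⟩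
    refine shift_map_eq_zero.1 (?_ : (𝟙 X)⟦(1 : ℤ)⟧' = 0)
    rw [CategoryTheory.Functor.map_id]
    exact h
  refine IsLocalRing.of_isUnit_or_isUnit_one_sub_self fun φ => ?_
  obtain ⟨φ, rfl⟩ := (shiftFunctor T (1 : ℤ)).map_surjective φ
  rcases isIso_or_isIso_sub φ with h | h
  · exact Or.inl ((isUnit_iff_isIso _).2 inferInstance)
  · refine Or.inr ((isUnit_iff_isIso _).2 ?_)
    have : IsIso ((𝟙 X - φ)⟦(1 : ℤ)⟧') := inferInstance
    rwa [Functor.map_sub, CategoryTheory.Functor.map_id] at this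

end KrullSchmidt

/-! ### Splitting `T` off the objects orthogonal to `C` -/

section Orthogonal

variable {C : T → Prop}

/-- The vanishing opposite to `hom_from_eq_zero`: the cone of a left approximation of `X` has an
indecomposable summand outside `C`, which must then be isomorphic to `X⟦1⟧`. -/
lemma hom_to_eq_zero [IsTriangulated T] (hKS : IsKrullSchmidt (T := T))
    (hC : PreClusterTilting C) (hQ : HasQuotCokernels C)
    {X : T} [IsLocalRing (End X)] (hXC : ¬ C X) (hX : leftPerp C X) :
    ∀ ⦃c : T⦄, C c → ∀ u : X ⟶ c, u = 0 := by
  obtain ⟨c₀, a, hc₀, ha⟩ := hC.covariantlyFinite X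
  obtain ⟨Y, b, w, HY⟩ := distinguished_cocone_triangle a
  have hYl : leftPerp C Y := hC.leftPerp_cone HY hc₀ ha
  suffices ha0 : a = 0 by
    intro c hc u
    obtain ⟨v, rfl⟩ := ha hc u
    rw [ha0, zero_comp]
  rcases exists_local_summand hKS hC Y with hY | ⟨F, hF, hFC, s, r, hsr⟩
  · exfalso
    have hw : w = 0 := hC.leftPerp_iff.1 hX hY w
    obtain ⟨v, hv⟩ := tri_desc₁ HY (𝟙 X) (by rw [hw, zero_comp])
    exact hXC (hC.summandClosed ⟨a, v, hv.symm⟩ hc₀)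
  · have hbr : b ≫ r = 0 :=
      hom_from_eq_zero hC hQ hFC (summand_leftPerp ⟨s, r, hsr⟩ hYl) hc₀ _
    obtain ⟨r', rfl⟩ := tri_desc₃ HY r hbr
    have := isLocalRing_end_shift (X := X)
    have h₁ : r' ≫ s ≫ w = 𝟙 (X⟦(1 : ℤ)⟧) :=
      isIso_of_splitMono not_isZero_of_local (by rw [Category.assoc, hsr])
    rw [← shift_map_eq_zero, ← Category.id_comp (a⟦(1 : ℤ)⟧'), ← h₁]
    simp only [Category.assoc]
    rw [tri_zero₃₁ HY, comp_zero, comp_zero]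

/-- The objects of `^⊥₁C ∩ C^⊥₁` that have no nonzero morphisms from or to `C`. -/
def orth (C : T → Prop) : T → Prop := fun X =>
  leftPerp C X ∧ rightPerp C X ∧
    ∀ ⦃c : T⦄, C c → (∀ u : c ⟶ X, u = 0) ∧ ∀ u : X ⟶ c, u = 0

/-- The objects that have no nonzero morphisms from or to `orth C`. -/
def biorth (C : T → Prop) : T → Prop := fun Y =>
  ∀ ⦃X : T⦄, orth C X → (∀ u : X ⟶ Y, u = 0) ∧ ∀ u : Y ⟶ X, u = 0

lemma orth_summandClosed : SummandClosed (orth C) := by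
  rintro X Z ⟨s, r, hsr⟩ ⟨h₁, h₂, h₃⟩
  refine ⟨summand_leftPerp ⟨s, r, hsr⟩ h₁, fun c hc u => ?_, fun c hc => ⟨fun u => ?_, fun u => ?_⟩⟩
  · rw [← Category.comp_id u, ← CategoryTheory.Functor.map_id, ← hsr, Functor.map_comp,
      ← Category.assoc, h₂ hc (u ≫ s⟦(1 : ℤ)⟧'), zero_comp]
  · rw [← Category.comp_id u, ← hsr, ← Category.assoc, (h₃ hc).1 (u ≫ s), zero_comp]
  · rw [← Category.id_comp u, ← hsr, Category.assoc, (h₃ hc).2 (r ≫ u), comp_zero]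

lemma biorth_summandClosed : SummandClosed (biorth C) := by
  rintro Y Z ⟨s, r, hsr⟩ hZ X hX
  refine ⟨fun u => ?_, fun u => ?_⟩
  · rw [← Category.comp_id u, ← hsr, ← Category.assoc, (hZ hX).1 (u ≫ s), zero_comp]
  · rw [← Category.id_comp u, ← hsr, Category.assoc, (hZ hX).2 (r ≫ u), comp_zero]

lemma orth_extClosed : ExtClosed (orth C) := by
  rintro A B D f g h H ⟨a₁, a₂, a₃⟩ ⟨d₁, d₂, d₃⟩
  refine ⟨fun c hc u => ?_, fun c hc u => ?_, fun c hc => ⟨fun u => ?_, fun u => ?_⟩⟩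
  · obtain ⟨v, rfl⟩ := tri_desc₂ H u (a₁ hc _)
    rw [d₁ hc v, comp_zero]
  · obtain ⟨v, rfl⟩ := tri_lift₂_shift H u (d₂ hc _)
    rw [a₂ hc v, zero_comp]
  · obtain ⟨v, rfl⟩ := tri_lift₂ H u ((d₃ hc).1 _)
    rw [(a₃ hc).1 v, zero_comp]
  · obtain ⟨v, rfl⟩ := tri_desc₂ H u ((a₃ hc).2 _)
    rw [(d₃ hc).2 v, comp_zero]

lemma biorth_extClosed : ExtClosed (biorth C) := by
  intro A B D f g h H hA hD X hX
  refine ⟨fun u => ?_, fun u => ?_⟩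
  · obtain ⟨v, rfl⟩ := tri_lift₂ H u ((hD hX).1 _)
    rw [(hA hX).1 v, zero_comp]
  · obtain ⟨v, rfl⟩ := tri_desc₂ H u ((hA hX).2 _)
    rw [(hD hX).2 v, comp_zero]

lemma ExtClosed.sumClosed {P : T → Prop} (hP : ExtClosed P) : SumClosed P := fun _ _ hX hY =>
  hP _ _ _ (binaryBiproductTriangle_distinguished _ _) hX hY

lemma orth_of_isZero {X : T} (hX : IsZero X) : orth C X :=
  ⟨fun _ _ _ => hX.eq_of_src _ _,
    fun _ _ _ => (Functor.map_isZero (shiftFunctor T (1 : ℤ)) hX).eq_of_tgt _ _,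
    fun _ _ => ⟨fun _ => hX.eq_of_tgt _ _, fun _ => hX.eq_of_src _ _⟩⟩

lemma biorth_of_isZero {X : T} (hX : IsZero X) : biorth C X :=
  fun _ _ => ⟨fun _ => hX.eq_of_tgt _ _, fun _ => hX.eq_of_src _ _⟩

/-- A monomorphism `k` of `T/C` into an object `X` of `^⊥₁C` splits in `T/C`: the map `u` from
the cocone of `k` to `I` factors through `C`, and its part in `C` extends along `u`. -/
lemma exists_retraction (hC : PreClusterTilting C) {X I : T} (hX : leftPerp C X) {k : I ⟶ X}
    (hk : ∀ ⦃W : T⦄ (g : W ⟶ I), FactorsThru C (g ≫ k) → FactorsThru C g) :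
    ∃ r : X ⟶ I, FactorsThru C (k ≫ r - 𝟙 I) := by
  obtain ⟨Q, u, δ, H⟩ := distinguished_cocone_triangle₁ k
  obtain ⟨c, a', v, hc, rfl⟩ := hk u (by
    rw [tri_zero₁₂ H]
    exact hC.ft_zero)
  obtain ⟨b', hb'⟩ := tri_desc₁ H a' (hX hc _)
  obtain ⟨r, hr⟩ := tri_desc₂ H (𝟙 I - b' ≫ v) (by
    rw [Preadditive.comp_sub, Category.comp_id, ← Category.assoc _ b', ← hb', sub_self])
  refine ⟨r, c, b', -v, hc, ?_⟩
  rw [← hr, Preadditive.comp_neg]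
  abel

/-- A nonzero morphism from an indecomposable object of `orth C` is a split monomorphism: the
kernel of its image in `T/C` is a direct summand of `X` there, hence vanishes. -/
lemma splitMono_of_ne_zero (hC : PreClusterTilting C) (hK : HasQuotKernels C) {X Y : T}
    [IsLocalRing (End X)] (hX : orth C X) {f : X ⟶ Y} (hf : f ≠ 0) :
    ∃ r : Y ⟶ X, f ≫ r = 𝟙 X := by
  obtain ⟨K, k, hk₁, hk₂, hk₃⟩ := hK f
  obtain ⟨r, hr⟩ := exists_retraction hC hX.1 hk₂
  rcases isIso_or_isIso_sub (r ≫ k) with hi | hi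
  · exfalso
    have h₁ : FactorsThru C f := by
      have := ft_comp_left hk₁ (inv (r ≫ k) ≫ r)
      rwa [Category.assoc, ← Category.assoc r, IsIso.inv_hom_id_assoc] at this
    obtain ⟨c, x, y, hc, rfl⟩ := h₁
    exact hf (by rw [(hX.2.2 hc).2 x, zero_comp])
  · have h₁ : FactorsThru C k := by
      have := ft_comp_right (ft_neg (ft_comp_right hr k)) (inv (𝟙 X - r ≫ k))
      rwa [show -((k ≫ r - 𝟙 K) ≫ k) = k ≫ (𝟙 X - r ≫ k) by
        simp only [Preadditive.sub_comp, Preadditive.comp_sub, Category.assoc, Category.id_comp,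
          Category.comp_id, neg_sub], Category.assoc, IsIso.hom_inv_id, Category.comp_id] at this
    obtain ⟨Q, u, δ, H⟩ := distinguished_cocone_triangle₁ f
    obtain ⟨l, hl⟩ := hk₃ u (by
      rw [tri_zero₁₂ H]
      exact hC.ft_zero)
    have h₂ : FactorsThru C u := by
      have := hC.ft_sub (ft_comp_left h₁ l) hl
      rwa [sub_sub_cancel] at this
    have h₃ : u = 0 := h₂.eq_zero fun _ hc => (hX.2.2 hc).1
    obtain ⟨r, hr⟩ := tri_desc₂ H (𝟙 X) (by rw [h₃, zero_comp])
    exact ⟨r, hr.symm⟩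

/-- The third map of the triangle on `g` is zero, since otherwise it would be a split monomorphism
annihilated by `g`. -/
lemma splitEpi_of_ne_zero (hC : PreClusterTilting C) (hK : HasQuotKernels C) {X Y : T}
    [IsLocalRing (End X)] (hX : orth C X) {g : Y ⟶ X} (hg : g ≠ 0) :
    ∃ s : X ⟶ Y, s ≫ g = 𝟙 X := by
  obtain ⟨Z, x, y, H⟩ := distinguished_cocone_triangle g
  by_cases hx : x = 0
  · obtain ⟨s, hs⟩ := tri_lift₂ H (𝟙 X) (by rw [hx, comp_zero])
    exact ⟨s, hs.symm⟩
  · obtain ⟨r, hr⟩ := splitMono_of_ne_zero hC hK hX hx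
    exact absurd (by rw [← Category.comp_id g, ← hr, ← Category.assoc, tri_zero₁₂ H, zero_comp]) hg

lemma isSummand_of_local {X Y : T} [IsLocalRing (End X)] [IsLocalRing (End Y)]
    (h : IsSummand X Y) : IsSummand Y X := by
  obtain ⟨s, r, h⟩ := h
  exact ⟨r, s, isIso_of_splitMono not_isZero_of_local h⟩

/-- An indecomposable object `Y` with a nonzero morphism from or to an object of `orth C` is
isomorphic to an indecomposable summand of that object. -/
lemma orth_of_local (hKS : IsKrullSchmidt (T := T)) (hC : PreClusterTilting C)
    (hK : HasQuotKernels C) {Y : T} [IsLocalRing (End Y)] (X : T) :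
    orth C X → (∃ u : X ⟶ Y, u ≠ 0) ∨ (∃ u : Y ⟶ X, u ≠ 0) → orth C Y := by
  induction X using hKS.induction with
  | @hiso X X' e ih =>
    intro hX hu
    refine ih (orth_summandClosed.isoClosed e.symm hX) (hu.imp ?_ ?_)
    · rintro ⟨u, hu⟩
      exact ⟨e.hom ≫ u, fun h => hu (by rw [← cancel_epi e.hom, h, comp_zero])⟩
    · rintro ⟨u, hu⟩
      exact ⟨u ≫ e.inv, fun h => hu (by rw [← cancel_mono e.inv, h, zero_comp])⟩
  | h0 h =>
    rintro - (⟨u, hu⟩ | ⟨u, hu⟩)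
    · exact absurd (h.eq_of_src _ _) hu
    · exact absurd (h.eq_of_tgt _ _) hu
  | @hadd X X' ih ih' =>
    intro hX hu
    have hX₁ := orth_summandClosed (isSummand_biprod_left X X') hX
    have hX₂ := orth_summandClosed (isSummand_biprod_right X X') hX
    by_contra hY
    have h₁ := mt (ih hX₁) hY
    have h₂ := mt (ih' hX₂) hY
    push Not at h₁ h₂
    rcases hu with ⟨u, hu⟩ | ⟨u, hu⟩
    · exact hu (biprod.hom_ext' _ _
        (by rw [h₁.1 (biprod.inl ≫ u), comp_zero]) (by rw [h₂.1 (biprod.inr ≫ u), comp_zero]))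
    · exact hu (biprod.hom_ext _ _
        (by rw [h₁.2 (u ≫ biprod.fst), zero_comp]) (by rw [h₂.2 (u ≫ biprod.snd), zero_comp]))
  | @hloc X hXl =>
    rintro hX (⟨u, hu⟩ | ⟨u, hu⟩)
    · obtain ⟨r, hr⟩ := splitMono_of_ne_zero hC hK hX hu
      exact orth_summandClosed (isSummand_of_local ⟨u, r, hr⟩) hX
    · obtain ⟨s, hs⟩ := splitEpi_of_ne_zero hC hK hX hu
      exact orth_summandClosed (isSummand_of_local ⟨s, u, hs⟩) hX

/-- The interchange of the two middle summands of a direct sum of four objects. -/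
noncomputable def biprodComm₄ (A B A' B' : T) : (A ⊞ B) ⊞ (A' ⊞ B') ≅ (A ⊞ A') ⊞ (B ⊞ B') where
  hom := biprod.lift (biprod.map biprod.fst biprod.fst) (biprod.map biprod.snd biprod.snd)
  inv := biprod.lift (biprod.map biprod.fst biprod.fst) (biprod.map biprod.snd biprod.snd)

/-- By `orth_of_local` each indecomposable object lies in `orth C` or in `biorth C`. -/
lemma exists_decomposition (hKS : IsKrullSchmidt (T := T)) (hC : PreClusterTilting C)
    (hK : HasQuotKernels C) (X : T) :
    ∃ A B : T, orth C A ∧ biorth C B ∧ Nonempty (X ≅ A ⊞ B) := by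
  obtain ⟨O, hO⟩ := HasZeroObject.zero (C := T)
  induction X using hKS.induction with
  | hiso e h =>
    obtain ⟨A, B, hA, hB, ⟨i⟩⟩ := h
    exact ⟨A, B, hA, hB, ⟨e.symm ≪≫ i⟩⟩
  | h0 h =>
    exact ⟨O, O, orth_of_isZero hO, biorth_of_isZero hO,
      ⟨h.iso ((biprod_isZero_iff O O).2 ⟨hO, hO⟩)⟩⟩
  | hadd h h' =>
    obtain ⟨A, B, hA, hB, ⟨i⟩⟩ := h
    obtain ⟨A', B', hA', hB', ⟨i'⟩⟩ := h'
    exact ⟨A ⊞ A', B ⊞ B', orth_extClosed.sumClosed hA hA', biorth_extClosed.sumClosed hB hB',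
      ⟨biprod.mapIso i i' ≪≫ biprodComm₄ A B A' B'⟩⟩
  | @hloc Y hY =>
    by_cases h : orth C Y
    · exact ⟨Y, O, h, biorth_of_isZero hO, ⟨isoBiprodZero hO⟩⟩
    · refine ⟨O, Y, orth_of_isZero hO, fun X hX => ?_, ⟨isoZeroBiprod hO⟩⟩
      have := mt (orth_of_local hKS hC hK X hX) h
      push Not at this
      exact this

lemma clusterTilting_of_isAbelian [IsTriangulated T] (hKS : IsKrullSchmidt (T := T))
    (hconn : ConnectedCat (T := T)) (hC : PreClusterTilting C)
    (hne : ∃ X : T, C X ∧ ¬ IsZero X) (hA : IsAbelian (QuotCat C)) : ClusterTilting C := by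
  obtain ⟨hK, hQ⟩ := hC.hasQuotKernels_and_cokernels hA
  obtain ⟨c, hc, hc0⟩ := hne
  -- connectedness of `T` leaves no room for nonzero objects in `orth C`
  have horth : ∀ X : T, orth C X → IsZero X := by
    intro X hX
    by_contra hX0
    exact hconn ⟨orth C, biorth C, orth_summandClosed.isoClosed, biorth_summandClosed.isoClosed,
      orth_summandClosed, biorth_summandClosed, orth_extClosed, biorth_extClosed, ⟨X, hX, hX0⟩,
      ⟨c, fun X hX => ⟨(hX.2.2 hc).2, (hX.2.2 hc).1⟩, hc0⟩, exists_decomposition hKS hC hK,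
      fun _ _ hX hY => (hY hX).1, fun _ _ hY hX => (hY hX).2⟩
  have key : C = leftPerp C := by
    funext X
    refine propext ⟨fun hX _ hc => hC.rigid hX hc, fun hX => ?_⟩
    rcases exists_local_summand hKS hC X with h | ⟨F, hF, hFC, hFX⟩
    · exact h
    · have hFl := summand_leftPerp hFX hX
      exact absurd (horth F ⟨hFl, hC.leftPerp_iff.1 hFl, fun c hc =>
        ⟨hom_from_eq_zero hC hQ hFC hFl hc, hom_to_eq_zero hKS hC hQ hFC hFl hc⟩⟩)
        not_isZero_of_local
  exact ⟨hC, key.trans hC.perp_eq.symm, key⟩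

end Orthogonal

/-- Assume `T` is connected and `C` is a pre-cluster tilting subcategory
containing a nonzero object. Then `C` is cluster tilting iff `T/C` is abelian. -/
theorem stmt5 [IsTriangulated T] (hKS : IsKrullSchmidt (T := T))
    (hconn : ConnectedCat (T := T))
    (C : T → Prop) (hCiso : IsoClosed C) (hC : PreClusterTilting C)
    (hne : ∃ X : T, C X ∧ ¬ IsZero X) :
    ClusterTilting C ↔ IsAbelian (QuotCat C) := by
  exact ⟨ClusterTilting.isAbelian, clusterTilting_of_isAbelian hKS hconn hC hne⟩

end ClusterPaper
end

section
/- Let (U,V) and (V,U) be cotorsion pairs in T and set C := U ∩ V. Then the subcategory CoCone(C,U) of objects X admitting a distinguished triangle X → C₁ → U₂ → X[1] with C₁ in C and U₂ in U is closed under direct summands; dually, the subcategory Cone(V,C) of objects Y admitting a distinguished triangle V₁ → C₂ → Y → V₁[1] with V₁ in V and C₂ in C is closed under direct summands. Consequently H := CoCone(C,U) ∩ Cone(V,C) is closed under direct summands. -/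
/-!
The key point is that for a cotorsion pair `(U, V)` each half is the full orthogonal of the other:
`A ∈ U` as soon as `Hom(A, V[1]) = 0`, and `B ∈ V` as soon as `Hom(U, B[1]) = 0`
(`CotorsionPair.fst_of_ext`, `CotorsionPair.snd_of_ext`).

Let `X` be a summand of `Z`, via `s : X ⟶ Z` and `r : Z ⟶ X`, with a triangle `Z → C₁ → U₂`, and
take an approximation triangle `X → V' → U'` of `X`. It suffices to show `V' ∈ U`, that is, that
every `φ : V' ⟶ W[1]` with `W ∈ V` vanishes. The composite `Z → X → V'` extends along `Z → C₁`,
because `Hom(U₂, V'[1]) = 0`; since `Hom(C₁, W[1]) = 0`, the composite `Z → X → V' → W[1]` is zero,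
and precomposing with `s` gives `X → V' → W[1]` zero. Hence `φ` factors through `U'`, so it is zero
because `Hom(U', W[1]) = 0`. The statement on `Cone(V, C)` is dual.
-/

open CategoryTheory CategoryTheory.Limits CategoryTheory.Pretriangulated

attribute [local instance] CategoryTheory.Limits.hasBinaryBiproducts_of_finite_biproducts

universe v u

namespace ClusterPaper

variable {T : Type u} [Category.{v} T] [Preadditive T] [HasZeroObject T]
  [HasShift T ℤ] [∀ n : ℤ, (shiftFunctor T n).Additive] [Pretriangulated T]
  [HasFiniteBiproducts T]

/-- Exactness of `Hom(-, A)` at the first vertex of a triangle `X → Y → Z → X[1]`: the obstruction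
to extending `a : X ⟶ A` along `X ⟶ Y` is the composite `Z → X[1] → A[1]`. -/
lemma exists_extension {X Y Z A : T} {f : X ⟶ Y} {g : Y ⟶ Z} {δ : Z ⟶ X⟦(1 : ℤ)⟧}
    (hT : Triangle.mk f g δ ∈ distTriang T) (a : X ⟶ A) (ha : δ ≫ a⟦(1 : ℤ)⟧' = 0) :
    ∃ k : Y ⟶ A, a = f ≫ k := by
  obtain ⟨l, hl⟩ : ∃ l : Y⟦(1 : ℤ)⟧ ⟶ A⟦(1 : ℤ)⟧, a⟦(1 : ℤ)⟧' = (-f⟦(1 : ℤ)⟧') ≫ l :=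
    Triangle.yoneda_exact₃ _ (rot_of_distTriang _ hT) (a⟦(1 : ℤ)⟧') ha
  obtain ⟨k, rfl⟩ := (shiftFunctor T (1 : ℤ)).map_surjective l
  -- the sign comes from the convention for rotated triangles
  refine ⟨-k, (shiftFunctor T (1 : ℤ)).map_injective ?_⟩
  rw [hl, Functor.map_comp, Functor.map_neg, Preadditive.neg_comp, Preadditive.comp_neg]

/-- The left half of a cotorsion pair contains its whole orthogonal: in the triangle
`V_A → U_A → A → V_A[1]` the last map vanishes, so `A` is a summand of `U_A`. -/
lemma CotorsionPair.fst_of_ext {U V : T → Prop} (h : CotorsionPair U V) {A : T}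
    (hA : ∀ W, V W → Ext1Zero A W) : U A := by
  obtain ⟨VA, UA, f, g, δ, hV, hU, hT⟩ := h.tri_left A
  obtain ⟨s, hs⟩ := Triangle.coyoneda_exact₃ _ hT (𝟙 A) (hA VA hV _)
  exact h.summandClosed_fst ⟨s, g, hs.symm⟩ hU

/-- The right half of a cotorsion pair contains its whole orthogonal: in the triangle
`B → V^B → U^B → B[1]` the last map vanishes, so `B` is a summand of `V^B`. -/
lemma CotorsionPair.snd_of_ext {U V : T → Prop} (h : CotorsionPair U V) {B : T}
    (hB : ∀ W, U W → Ext1Zero W B) : V B := by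
  obtain ⟨VB, UB, f, g, δ, hV, hU, hT⟩ := h.tri_right B
  obtain ⟨r, hr⟩ := exists_extension hT (𝟙 B) (hB UB hU _)
  exact h.summandClosed_snd ⟨f, r, hr.symm⟩ hV

lemma CotorsionPair.summandClosed_coCone {U V : T → Prop} (h : CotorsionPair U V) :
    SummandClosed (CoCone (fun X => U X ∧ V X) U) := by
  rintro X Z ⟨s, r, hsr⟩ ⟨C₁, U₂, f, g, δ, ⟨hCU, -⟩, hU₂, hT⟩
  obtain ⟨V', U', f', g', δ', hV', hU', hT'⟩ := h.tri_right X
  refine ⟨V', U', f', g', δ', ⟨h.fst_of_ext fun W hW φ => ?_, hV'⟩, hU', hT'⟩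
  -- extend `Z → X → V'` along the left `V`-approximation `Z → C₁`
  obtain ⟨k, hk⟩ : ∃ k : C₁ ⟶ V', r ≫ f' = f ≫ k :=
    exists_extension hT (r ≫ f') (h.ext_zero hU₂ hV' _)
  have hφ : f' ≫ φ = 0 := by
    have h1 : k ≫ φ = 0 := h.ext_zero hCU hW _
    calc f' ≫ φ = s ≫ (r ≫ f') ≫ φ := by simp [reassoc_of% hsr]
      _ = 0 := by rw [hk, Category.assoc, h1, comp_zero, comp_zero]
  obtain ⟨ψ, hψ⟩ := Triangle.yoneda_exact₂ _ hT' φ hφ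
  have h2 : ψ = 0 := h.ext_zero hU' hW _
  exact hψ.trans (by rw [h2]; exact comp_zero)

lemma CotorsionPair.summandClosed_cone {U V : T → Prop} (h : CotorsionPair U V) :
    SummandClosed (Cone V (fun X => U X ∧ V X)) := by
  rintro Y Z ⟨s, r, hsr⟩ ⟨V₁, C₂, f, g, δ, hV₁, ⟨-, hCV⟩, hT⟩
  obtain ⟨V', U', f', g', δ', hV', hU', hT'⟩ := h.tri_left Y
  refine ⟨V', U', f', g', δ', hV', ⟨hU', h.snd_of_ext fun W hW φ => ?_⟩, hT'⟩
  -- lift `U' → Y → Z` along the right `U`-approximation `C₂ → Z`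
  obtain ⟨k, hk⟩ : ∃ k : U' ⟶ C₂, g' ≫ s = k ≫ g :=
    Triangle.coyoneda_exact₃ _ hT (g' ≫ s) (h.ext_zero hU' hV₁ _)
  have hφ : φ ≫ g'⟦(1 : ℤ)⟧' = 0 := by
    have h1 : φ ≫ k⟦(1 : ℤ)⟧' = 0 := h.ext_zero hW hCV _
    calc φ ≫ g'⟦(1 : ℤ)⟧' = φ ≫ (g' ≫ s)⟦(1 : ℤ)⟧' ≫ r⟦(1 : ℤ)⟧' := by
          rw [← Functor.map_comp, Category.assoc, hsr, Category.comp_id]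
      _ = 0 := by rw [hk, Functor.map_comp, Category.assoc, reassoc_of% h1, zero_comp]
  obtain ⟨ψ, hψ⟩ := Triangle.coyoneda_exact₁ _ (rot_of_distTriang _ hT') φ hφ
  have h2 : ψ = 0 := h.ext_zero hW hV' ψ
  exact hψ.trans (by rw [h2]; exact zero_comp)

/-- With `(U,V)` and `(V,U)` cotorsion pairs and `C := U ∩ V`, the
subcategories `CoCone(C,U)`, `Cone(V,C)` and `H := CoCone(C,U) ∩ Cone(V,C)` are
closed under direct summands. -/
theorem stmt6 [IsTriangulated T] (hKS : IsKrullSchmidt (T := T))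
    (U V : T → Prop) (hUiso : IsoClosed U) (hUsum : SumClosed U)
    (hViso : IsoClosed V) (hVsum : SumClosed V)
    (hUV : CotorsionPair U V) (hVU : CotorsionPair V U) :
    SummandClosed (CoCone (fun X => U X ∧ V X) U) ∧
    SummandClosed (Cone V (fun X => U X ∧ V X)) ∧
    SummandClosed (fun X =>
      CoCone (fun Y => U Y ∧ V Y) U X ∧ Cone V (fun Y => U Y ∧ V Y) X) := by
  refine ⟨hUV.summandClosed_coCone, hUV.summandClosed_cone, ?_⟩
  rintro X Z hXZ ⟨h₁, h₂⟩
  exact ⟨hUV.summandClosed_coCone hXZ h₁, hUV.summandClosed_cone hXZ h₂⟩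

end ClusterPaper
end

section
/- Let (U,V) and (V,U) be cotorsion pairs in T with C := U ∩ V, and let f : A → B be a morphism in T such that neither A nor B has a nonzero direct summand lying in V. (a) If the image of f in the quotient category T/V is a monomorphism and B belongs to U, then A belongs to U. (b) If the image of f in T/V is an epimorphism and A belongs to U, then B belongs to U. -/
/-!
The key point is that, under either hypothesis, the identity of the object in question is a sum
`p + q` with `p` factoring through `V` and `q` factoring through `U`.

For the monomorphism case, take a triangle `X ⟶ A ⟶ U₀ ⟶ X[1]` with `X[1] ∈ V` and `U₀ ∈ U`, and
write `w : X ⟶ A`. Since `B ∈ U`, the composite `w ≫ f` vanishes, so by monicity `w` factors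
through `V`, say `w = s ≫ t` with `s : X ⟶ V'`. The map `U₀ ⟶ X[1] ⟶ V'[1]` is zero, hence `s`
extends along `w` to `e : A ⟶ V'`. Then `w ≫ (𝟙 - e ≫ t) = 0`, so `𝟙 - e ≫ t` factors through
`U₀`. The epimorphism case is dual, using a triangle `V₀ ⟶ U₀ ⟶ B ⟶ V₀[1]`.

Given such a decomposition of `𝟙 A`, restrict it to an indecomposable summand of `A`: as the
endomorphism ring is local, the component through `V` or the one through `U` is invertible. The
former would make the summand a nonzero object of `V`, so every summand lies in `U`
(`fst_of_id_eq_add`).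
-/

open CategoryTheory CategoryTheory.Limits CategoryTheory.Pretriangulated

attribute [local instance] CategoryTheory.Limits.hasBinaryBiproducts_of_finite_biproducts

universe v u

namespace ClusterPaper

variable {T : Type u} [Category.{v} T] [Preadditive T] [HasZeroObject T]
  [HasShift T ℤ] [∀ n : ℤ, (shiftFunctor T n).Additive] [Pretriangulated T]
  [HasFiniteBiproducts T]

/-- An object with a factorization of an automorphism through `Z` is a summand of `Z`. -/
theorem isSummand_of_isIso {X Z : T} (a : X ⟶ Z) (b : Z ⟶ X) [IsIso (a ≫ b)] :
    IsSummand X Z :=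
  ⟨a, b ≫ inv (a ≫ b), by rw [← Category.assoc, IsIso.hom_inv_id]⟩

/-- Maps factoring through a class closed under finite sums and summands form an ideal, so
`quotRel` is a congruence. The zero object lies in `V` as a summand of any object of `V`, which
is why `V` has to be inhabited. -/
theorem quotRel_congruence {V : T → Prop} (hsum : SumClosed V) (hsd : SummandClosed V)
    (hne : ∃ X, V X) :
    Congruence (quotRel V) where
  equivalence := by
    intro X Y
    refine ⟨fun f => ?_, ?_, ?_⟩
    · obtain ⟨Z, hZ⟩ := hne
      exact ⟨Z, 0, 0, hZ, by simp⟩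
    · rintro f g ⟨Z, a, b, hZ, h⟩
      exact ⟨Z, -a, b, hZ, by simp [h]⟩
    · rintro f g k ⟨Z, a, b, hZ, h⟩ ⟨Z', a', b', hZ', h'⟩
      exact ⟨Z ⊞ Z', biprod.lift a a', biprod.desc b b', hsum hZ hZ', by simp [h, h']⟩
  comp_left := by
    rintro X Y W k f g ⟨Z, a, b, hZ, h⟩
    exact ⟨Z, k ≫ a, b, hZ, by simp [h]⟩
  comp_right := by
    rintro X Y W f g k ⟨Z, a, b, hZ, h⟩
    exact ⟨Z, a, b ≫ k, hZ, by rw [← Category.assoc, h, Preadditive.sub_comp]⟩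

/-- The first class of a cotorsion pair contains the left perpendicular class of the second: if
the map `X ⟶ V₀[1]` of an approximation triangle vanishes, then `X` is a summand of `U₀ ∈ U`. -/
theorem CotorsionPair.fst_of_ext_zero {U V : T → Prop} (h : CotorsionPair U V) {X : T}
    (hX : leftPerp V X) : U X := by
  obtain ⟨V₀, U₀, a, b, c, hV₀, hU₀, hT⟩ := h.tri_left X
  obtain ⟨s, hs⟩ := Triangle.coyoneda_exact₃ _ hT (𝟙 X) (hX hV₀ _)
  exact h.summandClosed_fst ⟨s, b, hs.symm⟩ hU₀

/-- If the identity of `A` is a sum of a map through `V` and a map through `U`, and `A` has no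
nonzero summand in `V`, then `A` lies in `U`. -/
theorem CotorsionPair.fst_of_id_eq_add (hKS : IsKrullSchmidt (T := T)) {U V : T → Prop}
    (hUV : CotorsionPair U V) {A : T} (hA : ∀ X : T, IsSummand X A → V X → IsZero X)
    {p q : A ⟶ A} (hp : FactorsThru V p) (hq : FactorsThru U q) (hpq : p + q = 𝟙 A) :
    U A := by
  obtain ⟨n, F, ⟨φ⟩, hF⟩ := hKS A
  obtain ⟨V₀, a, b, hV₀, rfl⟩ := hp
  obtain ⟨U₀, c, d, hU₀, rfl⟩ := hq
  have hFU : ∀ i, U (F i) := by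
    intro i
    let ι : F i ⟶ A := biproduct.ι F i ≫ φ.inv
    let π : A ⟶ F i := φ.hom ≫ biproduct.π F i
    have hιπ : ι ≫ π = 𝟙 (F i) := by simp [ι, π]
    let x : End (F i) := (ι ≫ a) ≫ (b ≫ π)
    let y : End (F i) := (ι ≫ c) ≫ (d ≫ π)
    have hxy : x + y = 1 := by
      have h : ι ≫ (a ≫ b + c ≫ d) ≫ π = 𝟙 (F i) := by rw [hpq, Category.id_comp, hιπ]
      simpa [x, y, End.one_def] using h
    have := hF i
    rcases IsLocalRing.isUnit_or_isUnit_of_add_one hxy with hx | hy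
    · have : IsIso ((ι ≫ a) ≫ (b ≫ π)) := (isUnit_iff_isIso x).1 hx
      have hz : IsZero (F i) := hA _ ⟨ι, π, hιπ⟩
        (hUV.summandClosed_snd (isSummand_of_isIso (ι ≫ a) (b ≫ π)) hV₀)
      exact absurd (hz.eq_of_src (𝟙 (F i)) 0) (one_ne_zero (α := End (F i)))
    · have : IsIso ((ι ≫ c) ≫ (d ≫ π)) := (isUnit_iff_isIso y).1 hy
      exact hUV.summandClosed_fst (isSummand_of_isIso (ι ≫ c) (d ≫ π)) hU₀
  refine hUV.fst_of_ext_zero fun W hW g => ?_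
  rw [← cancel_epi φ.inv, comp_zero]
  exact biproduct.hom_ext' _ _ fun i => by
    rw [comp_zero]
    exact hUV.ext_zero (hFU i) hW _

/-- Let `(U,V)`, `(V,U)` be cotorsion pairs and `f : A ⟶ B` with `A`, `B`
having no nonzero direct summand in `V`. If the image of `f` in `T/V` is a
monomorphism and `B ∈ U` then `A ∈ U`; if it is an epimorphism and `A ∈ U` then `B ∈ U`. -/
theorem stmt7 [IsTriangulated T] (hKS : IsKrullSchmidt (T := T))
    (U V : T → Prop) (hUiso : IsoClosed U) (hUsum : SumClosed U)
    (hViso : IsoClosed V) (hVsum : SumClosed V)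
    (hUV : CotorsionPair U V) (hVU : CotorsionPair V U)
    {A B : T} (f : A ⟶ B)
    (hA : ∀ X : T, IsSummand X A → V X → IsZero X)
    (hB : ∀ X : T, IsSummand X B → V X → IsZero X) :
    (Mono ((Quotient.functor (quotRel V)).map f) → U B → U A) ∧
    (Epi ((Quotient.functor (quotRel V)).map f) → U A → U B) := by
  have hcong : Congruence (quotRel V) := by
    obtain ⟨V₀, -, -, -, -, hV₀, -⟩ := hUV.tri_left A
    exact quotRel_congruence hVsum hUV.summandClosed_snd ⟨V₀, hV₀⟩
  have hmap {X Y : T} {w : X ⟶ Y}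
      (h : (Quotient.functor (quotRel V)).map w = (Quotient.functor (quotRel V)).map 0) :
      FactorsThru V w := by
    simpa [quotRel] using (Quotient.functor_map_eq_iff (quotRel V) w 0).1 h
  constructor
  · intro hf hBU
    obtain ⟨U₀, V₀, a, b, c, hU₀, hV₀, hT⟩ := hVU.tri_right A
    -- Rotating back gives the triangle `X ⟶ A ⟶ U₀ ⟶ X[1]` with `X = V₀[-1]`.
    obtain ⟨X, w, δ, hXV, hT'⟩ : ∃ (X : T) (w : X ⟶ A) (δ : U₀ ⟶ X⟦(1 : ℤ)⟧),
        V (X⟦(1 : ℤ)⟧) ∧ Triangle.mk w a δ ∈ distTriang T :=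
      ⟨_, _, _, hViso ((shiftEquiv T (1 : ℤ)).counitIso.symm.app V₀) hV₀,
        inv_rot_of_distTriang _ hT⟩
    have hwf : w ≫ f = 0 := by
      apply (shiftFunctor T (1 : ℤ)).map_injective
      rw [Functor.map_zero]
      exact hVU.ext_zero hXV hBU _
    have hw : FactorsThru V w := hmap <| by
      rw [← cancel_mono ((Quotient.functor (quotRel V)).map f), ← Functor.map_comp,
        ← Functor.map_comp, hwf, zero_comp]
    obtain ⟨V', s, t, hV', hst⟩ := hw
    obtain ⟨e', he'⟩ : ∃ e' : A⟦(1 : ℤ)⟧ ⟶ V'⟦(1 : ℤ)⟧, s⟦(1 : ℤ)⟧' = (-w⟦(1 : ℤ)⟧') ≫ e' :=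
      Triangle.yoneda_exact₃ _ (rot_of_distTriang _ hT') (s⟦(1 : ℤ)⟧')
      (hUV.ext_zero hU₀ hV' _)
    obtain ⟨e, rfl⟩ := (shiftFunctor T (1 : ℤ)).map_surjective e'
    -- Rotation introduces a sign, so `-e` is the extension of `s` along `w`.
    have hs : s = w ≫ (-e) := by
      apply (shiftFunctor T (1 : ℤ)).map_injective
      rw [he', Functor.map_comp, Functor.map_neg, Preadditive.neg_comp, Preadditive.comp_neg]
    obtain ⟨z, hz⟩ : ∃ z : U₀ ⟶ A, 𝟙 A - (-e) ≫ t = a ≫ z := Triangle.yoneda_exact₂ _ hT' _ (by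
      change w ≫ _ = 0
      rw [Preadditive.comp_sub, ← Category.assoc, ← hs, hst, Category.comp_id, sub_self])
    exact hUV.fst_of_id_eq_add hKS hA ⟨V', -e, t, hV', rfl⟩ ⟨U₀, a, z, hU₀, hz.symm⟩
      (add_sub_cancel _ _)
  · intro hf hAU
    obtain ⟨V₀, U₀, a, b, w, hV₀, hU₀, hT⟩ := hUV.tri_left B
    have hfw : f ≫ w = 0 := hUV.ext_zero hAU hV₀ _
    have hw : FactorsThru V w := hmap <| by
      rw [← cancel_epi ((Quotient.functor (quotRel V)).map f), ← Functor.map_comp,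
        ← Functor.map_comp, hfw, comp_zero]
    obtain ⟨V', s, t, hV', hst⟩ := hw
    obtain ⟨e, he⟩ : ∃ e : V' ⟶ B, t = e ≫ w :=
      Triangle.coyoneda_exact₁ _ hT t (hVU.ext_zero hV' hU₀ _)
    obtain ⟨z, hz⟩ : ∃ z : B ⟶ U₀, 𝟙 B - s ≫ e = z ≫ b := Triangle.coyoneda_exact₃ _ hT _ (by
      change _ ≫ w = 0
      rw [Preadditive.sub_comp, Category.assoc, ← he, hst, Category.id_comp, sub_self])
    exact hUV.fst_of_id_eq_add hKS hB ⟨V', s, e, hV', rfl⟩ ⟨U₀, z, b, hU₀, hz.symm⟩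
      (add_sub_cancel _ _)

end ClusterPaper
end

section
/- Let (U,V) and (V,U) be cotorsion pairs in T with C := U ∩ V, and suppose the quotient category T/V is abelian. If f : U₁ → U₂ is a morphism between indecomposable objects U₁, U₂ of U, then f is an isomorphism in T or f factors through an object of C. -/
/-!
Work in the quotient `A := T/V`, and write `g : X ⟶ Y` also for its class there.

A monomorphism `m : I ⟶ B` of `A` with `B ∈ U` splits. In `T`, let `Z ⟶ I ⟶ B` be a triangle on
`m`, and `U' ⟶ V' ⟶ I ⟶ U'⟦1⟧` the triangle given by the cotorsion pair `(V, U)`. Since `m` is a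
monomorphism, `Z ⟶ I` factors through `V`, so `Z ⟶ I ⟶ U'⟦1⟧` vanishes and `I ⟶ U'⟦1⟧` extends
along `m` to `B ⟶ U'⟦1⟧`. The composition of the latter with `U'⟦1⟧ ⟶ V'⟦1⟧` vanishes because
`Hom(U, V⟦1⟧) = 0`, so it lifts to a morphism `r : B ⟶ I`, and `m ≫ r - 𝟙` factors through `V'`
(`split_of_mono`). Dually, an epimorphism of `A` whose source lies in `U` splits
(`split_of_epi`).

As `A` is abelian, `f` is an epimorphism followed by a monomorphism in `A`. Both split, so
`f ≫ g ≫ f - f` factors through `V` for some `g : U₂ ⟶ U₁`. The endomorphism rings of `U₁` and `U₂`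
are local. If both `f ≫ g` and `g ≫ f` are invertible, so is `f`. Otherwise `𝟙 - f ≫ g` or
`𝟙 - g ≫ f` is invertible, and `f` factors through `V`. Finally, a morphism out of an object of `U`
that factors through `V` factors through `U ∩ V` (`factorsThru_core`).
-/

open CategoryTheory CategoryTheory.Limits CategoryTheory.Pretriangulated

attribute [local instance] CategoryTheory.Limits.hasBinaryBiproducts_of_finite_biproducts

universe v u

namespace ClusterPaper

variable {T : Type u} [Category.{v} T] [Preadditive T] [HasZeroObject T]
  [HasShift T ℤ] [∀ n : ℤ, (shiftFunctor T n).Additive] [Pretriangulated T]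
  [HasFiniteBiproducts T]

section Factor

variable {D : T → Prop}

lemma FactorsThru.precomp {X Y W : T} {f : X ⟶ Y} (h : FactorsThru D f) (k : W ⟶ X) :
    FactorsThru D (k ≫ f) := by
  obtain ⟨Z, a, b, hZ, rfl⟩ := h
  exact ⟨Z, k ≫ a, b, hZ, by simp⟩

lemma FactorsThru.postcomp {X Y W : T} {f : X ⟶ Y} (h : FactorsThru D f) (k : Y ⟶ W) :
    FactorsThru D (f ≫ k) := by
  obtain ⟨Z, a, b, hZ, rfl⟩ := h
  exact ⟨Z, a, b ≫ k, hZ, by simp⟩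

lemma FactorsThru.neg {X Y : T} {f : X ⟶ Y} (h : FactorsThru D f) : FactorsThru D (-f) := by
  obtain ⟨Z, a, b, hZ, rfl⟩ := h
  exact ⟨Z, -a, b, hZ, by simp⟩

lemma FactorsThru.add (hD : SumClosed D) {X Y : T} {f g : X ⟶ Y} (hf : FactorsThru D f)
    (hg : FactorsThru D g) : FactorsThru D (f + g) := by
  obtain ⟨Z, a, b, hZ, rfl⟩ := hf
  obtain ⟨Z', a', b', hZ', rfl⟩ := hg
  exact ⟨Z ⊞ Z', biprod.lift a a', biprod.desc b b', hD hZ hZ', by simp⟩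

/-- `quotRel D` is a congruence, so that equality in `T/D` means equality up to morphisms
factoring through `D`. -/
lemma congruence_quotRel (hD : SumClosed D) (Z : T) (hZ : D Z) : Congruence (quotRel D) where
  comp_left k _ _ h := by
    have := FactorsThru.precomp h k
    rwa [Preadditive.comp_sub] at this
  comp_right k h := by
    have := FactorsThru.postcomp h k
    rwa [Preadditive.sub_comp] at this
  equivalence :=
    { refl := fun f => ⟨Z, 0, 0, hZ, by simp⟩
      symm := fun h => by
        have := FactorsThru.neg h
        rwa [neg_sub] at this
      trans := fun h h' => by
        have := FactorsThru.add hD h h'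
        rwa [sub_add_sub_cancel] at this }

end Factor

/-- In an indecomposable object of a Krull–Schmidt category, `a` or `𝟙 - a` is invertible. -/
lemma Indec.isIso_or (hKS : IsKrullSchmidt (T := T)) {X : T} (hX : Indec X) (a : X ⟶ X) :
    IsIso a ∨ IsIso (𝟙 X - a) := by
  obtain ⟨n, F, ⟨e⟩, hF⟩ := hKS X
  -- some summand is present, because `X` is nonzero
  obtain ⟨i⟩ : Nonempty (Fin n) := by
    by_contra hn
    rw [not_nonempty_iff] at hn
    apply hX.1
    rw [IsZero.iff_id_eq_zero, ← cancel_mono e.hom]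
    exact biproduct.hom_ext _ _ fun j => hn.elim j
  have hloc := hF i
  let s : F i ⟶ X := biproduct.ι F i ≫ e.inv
  let r : X ⟶ F i := e.hom ≫ biproduct.π F i
  have hsr : s ≫ r = 𝟙 _ := by simp [s, r]
  -- the inclusion `s` of that summand is an isomorphism, because its cone vanishes
  have hs : IsIso s := by
    obtain ⟨W, p, q, hT⟩ := distinguished_cocone_triangle s
    have hmono : Mono s := mono_of_mono_fac hsr
    obtain ⟨ψ, -, -⟩ := exists_iso_binaryBiproduct_of_distTriang _ hT
      (Triangle.mor₃_eq_zero_of_mono₁ _ hT hmono)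
    rcases hX.2 _ _ ψ with h | h
    · exact absurd ((IsZero.iff_id_eq_zero _).1 h) (one_ne_zero (α := End (F i)))
    · exact (Triangle.isZero₃_iff_isIso₁ _ hT).1 h
  let b : End (F i) := s ≫ a ≫ inv s
  have ha : a = inv s ≫ b ≫ s := by simp [b]
  have hb : 𝟙 X - a = inv s ≫ (1 - b : End (F i)) ≫ s := by
    change 𝟙 X - a = inv s ≫ (𝟙 (F i) - s ≫ a ≫ inv s) ≫ s
    simp
  rcases IsLocalRing.isUnit_or_isUnit_of_add_one (add_sub_cancel b 1) with h | h
  · have := (isUnit_iff_isIso _).1 h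
    left; rw [ha]; infer_instance
  · have := (isUnit_iff_isIso _).1 h
    right; rw [hb]; infer_instance

section Cotorsion

variable {U V : T → Prop}

/-- A morphism out of an object of `U` that factors through `V` factors through `U ∩ V`: in the
triangle `V_Z ⟶ U_Z ⟶ Z ⟶ V_Z⟦1⟧` of an object `Z ∈ V`, the middle term is an extension of objects
of `V`, and every morphism from `U` to `Z` lifts to it. -/
lemma factorsThru_core (hUV : CotorsionPair U V) (hVU : CotorsionPair V U) {X Y : T} (hX : U X)
    {f : X ⟶ Y} (h : FactorsThru V f) : FactorsThru (fun X => U X ∧ V X) f := by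
  obtain ⟨Z, a, b, hZ, rfl⟩ := h
  obtain ⟨VZ, UZ, p, q, w, hVZ, hUZ, hT⟩ := hUV.tri_left Z
  obtain ⟨a', rfl⟩ : ∃ a' : X ⟶ UZ, a = a' ≫ q :=
    Triangle.coyoneda_exact₃ _ hT a (hUV.ext_zero hX hVZ _)
  refine ⟨UZ, a', q ≫ b, ⟨hUZ, ?_⟩, (Category.assoc _ _ _).symm⟩
  obtain ⟨U', V', p', q', w', hU', hV', hT'⟩ := hVU.tri_left UZ
  have hw : w' = 0 := by
    obtain ⟨k, hk⟩ : ∃ k : Z ⟶ U'⟦(1 : ℤ)⟧, w' = q ≫ k :=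
      Triangle.yoneda_exact₂ _ hT w' (hVU.ext_zero hVZ hU' _)
    have hk0 : k = 0 := hVU.ext_zero hZ hU' k
    rw [hk, hk0, comp_zero]
  obtain ⟨s, hs⟩ : ∃ s : UZ ⟶ V', 𝟙 UZ = s ≫ q' :=
    Triangle.coyoneda_exact₃ _ hT' (𝟙 UZ) ((Category.id_comp _).trans hw)
  exact hVU.summandClosed_fst ⟨s, q', hs.symm⟩ hV'

variable [Congruence (quotRel V)]

/-- Monomorphisms of `T/V` into an object of `U` split. -/
lemma split_of_mono (hUV : CotorsionPair U V) (hVU : CotorsionPair V U) {I B : T} (hB : U B)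
    (m : I ⟶ B) (hm : Mono ((Quotient.functor (quotRel V)).map m)) :
    ∃ r : B ⟶ I, FactorsThru V (m ≫ r - 𝟙 I) := by
  obtain ⟨Z, i, h, hT⟩ := distinguished_cocone_triangle₁ m
  obtain ⟨U', V', a, b, c, hU', hV', hT'⟩ := hVU.tri_left I
  have him : i ≫ m = 0 := comp_distTriang_mor_zero₁₂ _ hT
  have hi : FactorsThru V i := by
    have h0 : (Quotient.functor (quotRel V)).map i = (Quotient.functor (quotRel V)).map 0 := by
      rw [← cancel_mono ((Quotient.functor (quotRel V)).map m), ← Functor.map_comp,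
        ← Functor.map_comp, him, zero_comp]
    have := (Quotient.functor_map_eq_iff _ _ _).1 h0
    change FactorsThru V (i - 0) at this
    rwa [sub_zero] at this
  have hic : i ≫ c = 0 := by
    obtain ⟨D, x, y, hD, rfl⟩ := hi
    have hy : y ≫ c = 0 := hVU.ext_zero hD hU' _
    rw [Category.assoc, hy, comp_zero]
  obtain ⟨g, hg⟩ : ∃ g : B ⟶ U'⟦(1 : ℤ)⟧, c = m ≫ g := Triangle.yoneda_exact₂ _ hT c hic
  obtain ⟨r, hr⟩ : ∃ r : B ⟶ I, g = r ≫ c :=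
    Triangle.coyoneda_exact₁ _ hT' g (hUV.ext_zero hB hV' _)
  have hz : (m ≫ r - 𝟙 I) ≫ c = 0 := by
    rw [Preadditive.sub_comp, Category.assoc, ← hr, ← hg, Category.id_comp, sub_self]
  obtain ⟨k, hk⟩ := Triangle.coyoneda_exact₃ _ hT' _ hz
  exact ⟨r, V', k, b, hV', hk.symm⟩

/-- Epimorphisms of `T/V` out of an object of `U` split. -/
lemma split_of_epi (hUV : CotorsionPair U V) (hVU : CotorsionPair V U) {A I : T} (hA : U A)
    (e : A ⟶ I) (he : Epi ((Quotient.functor (quotRel V)).map e)) :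
    ∃ s : I ⟶ A, FactorsThru V (s ≫ e - 𝟙 I) := by
  obtain ⟨W, w, h, hT⟩ := distinguished_cocone_triangle e
  obtain ⟨V', U', a, b, c, hV', hU', hT'⟩ := hUV.tri_right I
  have hew : e ≫ w = 0 := comp_distTriang_mor_zero₁₂ _ hT
  have hw : FactorsThru V w := by
    have h0 : (Quotient.functor (quotRel V)).map w = (Quotient.functor (quotRel V)).map 0 := by
      rw [← cancel_epi ((Quotient.functor (quotRel V)).map e), ← Functor.map_comp,
        ← Functor.map_comp, hew, comp_zero]
    have := (Quotient.functor_map_eq_iff _ _ _).1 h0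
    change FactorsThru V (w - 0) at this
    rwa [sub_zero] at this
  have hcw : c ≫ w⟦(1 : ℤ)⟧' = 0 := by
    obtain ⟨D, x, y, hD, rfl⟩ := hw
    have hx : c ≫ x⟦(1 : ℤ)⟧' = 0 := hUV.ext_zero hU' hD _
    rw [Functor.map_comp, reassoc_of% hx, zero_comp]
  obtain ⟨g, hg⟩ : ∃ g : U' ⟶ A⟦(1 : ℤ)⟧, c = g ≫ (-e⟦(1 : ℤ)⟧') :=
    Triangle.coyoneda_exact₁ _ (rot_of_distTriang _ hT) c hcw
  obtain ⟨k, hk⟩ : ∃ k : I⟦(1 : ℤ)⟧ ⟶ A⟦(1 : ℤ)⟧, g = c ≫ k :=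
    Triangle.yoneda_exact₃ _ hT' g (hVU.ext_zero hV' hA _)
  obtain ⟨s, rfl⟩ := (shiftFunctor T (1 : ℤ)).map_surjective k
  have hz : c ≫ ((-s) ≫ e - 𝟙 I)⟦(1 : ℤ)⟧' = 0 := by
    rw [Functor.map_sub, Functor.map_comp, Functor.map_neg, CategoryTheory.Functor.map_id, Preadditive.comp_sub,
      Preadditive.neg_comp, Preadditive.comp_neg, ← Category.assoc, ← hk, Category.comp_id,
      sub_eq_zero, ← Preadditive.comp_neg]
    exact hg.symm
  obtain ⟨l, hl⟩ : ∃ l : V'⟦(1 : ℤ)⟧ ⟶ I⟦(1 : ℤ)⟧,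
      ((-s) ≫ e - 𝟙 I)⟦(1 : ℤ)⟧' = (-a⟦(1 : ℤ)⟧') ≫ l :=
    Triangle.yoneda_exact₃ _ (rot_of_distTriang _ hT') _ hz
  obtain ⟨l, rfl⟩ := (shiftFunctor T (1 : ℤ)).map_surjective l
  refine ⟨-s, V', -a, l, hV', (shiftFunctor T (1 : ℤ)).map_injective ?_⟩
  rw [hl, Functor.map_comp, Functor.map_neg]

/-- Every morphism between objects of `U` is von Neumann regular in `T/V`, as soon as `T/V` has
epi-mono factorizations. -/
lemma exists_regular (hUV : CotorsionPair U V) (hVU : CotorsionPair V U)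
    (hab : IsAbelian (QuotCat V)) {A B : T} (hA : U A) (hB : U B) (f : A ⟶ B) :
    ∃ g : B ⟶ A, FactorsThru V (f ≫ g ≫ f - f) := by
  obtain ⟨_⟩ := hab
  let Q := Quotient.functor (quotRel V)
  obtain ⟨I, e₀, m₀, he₀, hm₀, hf⟩ : ∃ (I : QuotCat V) (e₀ : Q.obj A ⟶ I) (m₀ : I ⟶ Q.obj B),
      Epi e₀ ∧ Mono m₀ ∧ e₀ ≫ m₀ = Q.map f :=
    ⟨_, Limits.factorThruImage (Q.map f), Limits.image.ι (Q.map f), inferInstance, inferInstance,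
      Limits.image.fac _⟩
  obtain ⟨I⟩ := I
  obtain ⟨e, rfl⟩ := Q.map_surjective (X := A) (Y := I) e₀
  obtain ⟨m, rfl⟩ := Q.map_surjective (X := I) (Y := B) m₀
  obtain ⟨s, hs⟩ := split_of_epi hUV hVU hA e he₀
  obtain ⟨r, hr⟩ := split_of_mono hUV hVU hB m hm₀
  have hs' : Q.map s ≫ Q.map e = 𝟙 _ := by
    rw [← Functor.map_comp, ← CategoryTheory.Functor.map_id]; exact CategoryTheory.Quotient.sound _ hs
  have hr' : Q.map m ≫ Q.map r = 𝟙 _ := by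
    rw [← Functor.map_comp, ← CategoryTheory.Functor.map_id]; exact CategoryTheory.Quotient.sound _ hr
  refine ⟨r ≫ s, (Quotient.functor_map_eq_iff (quotRel V) _ _).1 ?_⟩
  change Q.map _ = Q.map f
  rw [Functor.map_comp, Functor.map_comp, Functor.map_comp, ← hf]
  simp only [Category.assoc]
  rw [reassoc_of% hs', reassoc_of% hr']

end Cotorsion

/-- Let `(U,V)`, `(V,U)` be cotorsion pairs with `C := U ∩ V` and suppose
`T/V` is abelian. Any morphism between indecomposable objects of `U` is an isomorphism
in `T` or factors through an object of `C`. -/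
theorem stmt9 [IsTriangulated T] (hKS : IsKrullSchmidt (T := T))
    (U V : T → Prop) (hUiso : IsoClosed U) (hUsum : SumClosed U)
    (hViso : IsoClosed V) (hVsum : SumClosed V)
    (hUV : CotorsionPair U V) (hVU : CotorsionPair V U)
    (hab : IsAbelian (QuotCat V))
    {U₁ U₂ : T} (hU₁ : U U₁) (hU₂ : U U₂) (h₁ : Indec U₁) (h₂ : Indec U₂)
    (f : U₁ ⟶ U₂) :
    IsIso f ∨ FactorsThru (fun X => U X ∧ V X) f := by
  obtain ⟨Z, _, _, _, _, hZ, -⟩ := hUV.tri_left U₁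
  have := congruence_quotRel hVsum Z hZ
  obtain ⟨g, hg⟩ := exists_regular hUV hVU hab hU₁ hU₂ f
  have hl : (𝟙 _ - f ≫ g) ≫ f = -(f ≫ g ≫ f - f) := by simp
  have hr : f ≫ (𝟙 _ - g ≫ f) = -(f ≫ g ≫ f - f) := by simp
  rcases h₁.isIso_or hKS (f ≫ g) with i₁ | i₁
  · rcases h₂.isIso_or hKS (g ≫ f) with i₂ | i₂
    · left
      have : IsSplitMono f := ⟨⟨⟨g ≫ inv (f ≫ g), by rw [← Category.assoc, IsIso.hom_inv_id]⟩⟩⟩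
      have : Epi f := epi_of_epi g f
      exact isIso_of_epi_of_isSplitMono f
    · right
      refine factorsThru_core hUV hVU hU₁ ?_
      rw [(IsIso.eq_comp_inv _).2 hr]
      exact hg.neg.postcomp _
  · right
    refine factorsThru_core hUV hVU hU₁ ?_
    rw [(IsIso.eq_inv_comp _).2 hl]
    exact hg.neg.precomp _

end ClusterPaper
end

section
/- Let (U,V) and (V,U) be cotorsion pairs in T, set C := U ∩ V and K := U + V, the subcategory of objects isomorphic to X ⊕ Y with X in U and Y in V. Let D → C₀ →t K → D[1] be a distinguished triangle in which C₀ is in C, K is an object of K having no nonzero direct summand in C, and t : C₀ → K is a right C-approximation of K. If K is indecomposable, then D is isomorphic to C' ⊕ X where C' is in C and X is indecomposable and does not lie in C; and if moreover t is right minimal (every endomorphism g of C₀ with t ∘ g = t is an automorphism), then D itself is indecomposable and does not lie in C. -/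
/-!
The indecomposable object `K` of `U + V` lies in `U` or in `V`, so in either case
`Hom(K, C[1]) = 0` for `C = U ∩ V`; hence `s : D ⟶ C₀` is a left `C`-approximation, and
every endomorphism `p` of `D` extends to an endomorphism `(p, g, f)` of the triangle. Since
`End K` is local, `f` or `1 - f` is invertible. If `p` is idempotent, the relation
`f ≫ h = h ≫ p[1]` then shows that `h` kills `(1 - p)[1]` or `p[1]`, so `1 - p` or `p` factors
through `C₀` (`exists_factor_of_idempotent`): in each decomposition `D ≅ Y ⊞ Z`, one of the two
summands is a summand of `C₀`, hence lies in `C`.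

The connecting morphism `h` is nonzero, since otherwise `K` would be a summand of `C₀`. By
Krull–Schmidt, `h` stays nonzero after projecting `D` to some summand `X` with local endomorphism
ring (`exists_local_summand`). As `Hom(K, C[1]) = 0`, this `X` is not in `C`, so its complement
is. If moreover `t` is right minimal, no nonzero idempotent of `D` factors through `s`
(`idempotent_eq_zero_of_minimal`), so the dichotomy makes `D` indecomposable; and `D` is not in `C`
because `h ≠ 0`.
-/

open CategoryTheory CategoryTheory.Limits CategoryTheory.Pretriangulated

attribute [local instance] CategoryTheory.Limits.hasBinaryBiproducts_of_finite_biproducts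

universe v u

namespace ClusterPaper

variable {T : Type u} [Category.{v} T] [Preadditive T] [HasZeroObject T]
  [HasShift T ℤ] [∀ n : ℤ, (shiftFunctor T n).Additive] [Pretriangulated T]
  [HasFiniteBiproducts T]

/-- A morphism out of the first object of a distinguished triangle factors through the second
object as soon as its shift is killed by the connecting morphism. -/
lemma exists_factor_of_conn_comp_shift_eq_zero {D C₀ K X : T} {s : D ⟶ C₀} {t : C₀ ⟶ K}
    {h : K ⟶ D⟦(1 : ℤ)⟧} (hdist : Triangle.mk s t h ∈ distTriang T)
    (f : D ⟶ X) (hf : h ≫ f⟦(1 : ℤ)⟧' = 0) : ∃ k : C₀ ⟶ X, s ≫ k = f := by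
  obtain ⟨g, hg⟩ := Triangle.yoneda_exact₃ _ (rot_of_distTriang _ hdist) (f⟦(1 : ℤ)⟧') hf
  obtain ⟨g' : C₀ ⟶ X, hg'⟩ := (shiftFunctor T (1 : ℤ)).map_surjective g
  replace hg : f⟦(1 : ℤ)⟧' = (-s⟦(1 : ℤ)⟧') ≫ g'⟦(1 : ℤ)⟧' := by
    subst hg'
    exact hg
  refine ⟨-g', (shiftFunctor T (1 : ℤ)).map_injective ?_⟩
  rw [hg]
  simp [Functor.map_neg]

/-- Split epimorphisms are projections onto direct summands: the fibre of the epimorphism serves as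
a complement, because the connecting morphism of its triangle vanishes. -/
lemma exists_iso_biprod_of_splitEpi {A B : T} (a : A ⟶ B) (r : B ⟶ A) (har : a ≫ r = 𝟙 A) :
    ∃ (Z : T) (e : B ≅ Z ⊞ A), r = e.hom ≫ biprod.snd := by
  obtain ⟨Z, g, w, hT⟩ := distinguished_cocone_triangle₁ r
  have hrw : r ≫ w = 0 := comp_distTriang_mor_zero₂₃ _ hT
  have hw : w = 0 := by rw [← Category.id_comp w, ← har, Category.assoc, hrw, comp_zero]
  obtain ⟨e, -, he⟩ := exists_iso_binaryBiproduct_of_distTriang _ hT hw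
  exact ⟨Z, e, he⟩

lemma biprod_proj_add_proj {B Y Z : T} (e : B ≅ Y ⊞ Z) :
    (e.hom ≫ biprod.fst) ≫ (biprod.inl ≫ e.inv) +
      (e.hom ≫ biprod.snd) ≫ (biprod.inr ≫ e.inv) = 𝟙 B := by
  calc _ = e.hom ≫ (biprod.fst ≫ biprod.inl + biprod.snd ≫ biprod.inr) ≫ e.inv := by
        simp only [Preadditive.comp_add, Preadditive.add_comp, Category.assoc]
    _ = 𝟙 B := by simp [biprod.total]

lemma isZero_snd_of_proj_fst_eq_id {B Y Z : T} (e : B ≅ Y ⊞ Z)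
    (he : (e.hom ≫ biprod.fst) ≫ (biprod.inl ≫ e.inv) = 𝟙 B) : IsZero Z := by
  rw [IsZero.iff_id_eq_zero]
  calc 𝟙 Z = (biprod.inr ≫ e.inv) ≫ 𝟙 B ≫ e.hom ≫ biprod.snd := by simp
    _ = 0 := by rw [← he]; simp

lemma isZero_fst_of_proj_fst_eq_zero {B Y Z : T} (e : B ≅ Y ⊞ Z)
    (he : (e.hom ≫ biprod.fst) ≫ (biprod.inl ≫ e.inv) = 0) : IsZero Y := by
  rw [IsZero.iff_id_eq_zero]
  calc 𝟙 Y = (biprod.inl ≫ e.inv) ≫ ((e.hom ≫ biprod.fst) ≫ (biprod.inl ≫ e.inv)) ≫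
        e.hom ≫ biprod.fst := by simp
    _ = 0 := by rw [he]; simp

/-- The only idempotents of a local ring are `0` and `1`, so an object with local endomorphism
ring is indecomposable. -/
lemma indec_of_isLocalRing_end {X : T} (hX : IsLocalRing (End X)) : Indec X := by
  refine ⟨fun h0 => ?_, fun Y Z e => ?_⟩
  · exact one_ne_zero (α := End X) (h0.eq_of_src _ _)
  · let p : End X := (e.hom ≫ biprod.fst) ≫ (biprod.inl ≫ e.inv)
    have hp : p * p = p := by simp [p, End.mul_def]
    rcases IsLocalRing.isUnit_or_isUnit_of_add_one (add_sub_cancel p 1) with hu | hu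
    · right
      have : p = 1 := hu.mul_left_cancel (by rw [hp, mul_one])
      exact isZero_snd_of_proj_fst_eq_id e this
    · left
      have : p = 0 := hu.mul_left_cancel (by rw [sub_mul, hp, one_mul, sub_self, mul_zero])
      exact isZero_fst_of_proj_fst_eq_zero e this

/-- In a Krull–Schmidt category, a nonzero morphism into `X[1]` stays nonzero after projecting
to a suitable direct summand of `X` with local endomorphism ring. -/
lemma exists_local_summand_s10 (hKS : IsKrullSchmidt (T := T)) {W X : T}
    (h : W ⟶ X⟦(1 : ℤ)⟧) (hh : h ≠ 0) :
    ∃ (Z A : T) (e : X ≅ Z ⊞ A), IsLocalRing (End A) ∧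
      h ≫ (e.hom ≫ biprod.snd)⟦(1 : ℤ)⟧' ≠ 0 := by
  obtain ⟨n, f, ⟨φ⟩, hf⟩ := hKS X
  have key : ∃ i, h ≫ (φ.hom ≫ biproduct.π f i)⟦(1 : ℤ)⟧' ≠ 0 := by
    by_contra! hall
    apply hh
    have hid : 𝟙 X = ∑ i, (φ.hom ≫ biproduct.π f i) ≫ (biproduct.ι f i ≫ φ.inv) := by
      calc 𝟙 X = φ.hom ≫ (∑ i, biproduct.π f i ≫ biproduct.ι f i) ≫ φ.inv := by
            simp [biproduct.total]
        _ = _ := by simp only [Preadditive.comp_sum, Preadditive.sum_comp, Category.assoc]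
    calc h = h ≫ (𝟙 X)⟦(1 : ℤ)⟧' := by simp
      _ = 0 := by
        rw [hid, Functor.map_sum, Preadditive.comp_sum]
        refine Finset.sum_eq_zero fun i _ => ?_
        rw [Functor.map_comp, reassoc_of% (hall i), zero_comp]
  obtain ⟨i, hi⟩ := key
  obtain ⟨Z, e, he⟩ := exists_iso_biprod_of_splitEpi (biproduct.ι f i ≫ φ.inv)
    (φ.hom ≫ biproduct.π f i) (by simp)
  exact ⟨Z, f i, e, hf i, he ▸ hi⟩

/-- In a Krull–Schmidt category, endomorphism rings of indecomposable objects are local: `K` is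
isomorphic to any of its nonzero summands, in particular to one with local endomorphism ring. -/
lemma isIso_or_isIso_id_sub (hKS : IsKrullSchmidt (T := T)) {K : T} (hK : Indec K) (f : K ⟶ K) :
    IsIso f ∨ IsIso (𝟙 K - f) := by
  have hne : 𝟙 (K⟦(1 : ℤ)⟧) ≠ 0 := fun h0 => hK.1 <| by
    rw [IsZero.iff_id_eq_zero]
    exact (shiftFunctor T (1 : ℤ)).map_injective (by simpa using h0)
  obtain ⟨Z, A, e, hA, -⟩ := exists_local_summand_s10 hKS (𝟙 (K⟦(1 : ℤ)⟧)) hne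
  have hZ : IsZero Z := (hK.2 Z A e).resolve_right (indec_of_isLocalRing_end hA).1
  obtain ⟨i⟩ : Nonempty (K ≅ A) := ⟨e ≪≫ (isoZeroBiprod hZ).symm⟩
  let c (g : K ⟶ K) : End A := i.inv ≫ g ≫ i.hom
  have hc (g : K ⟶ K) (hg : IsUnit (c g)) : IsIso g := by
    have : IsIso (i.inv ≫ g ≫ i.hom) := (isUnit_iff_isIso _).1 hg
    have h2 : g = i.hom ≫ (i.inv ≫ g ≫ i.hom) ≫ i.inv := by simp
    rw [h2]
    exact IsIso.comp_isIso' inferInstance (IsIso.comp_isIso' this inferInstance)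
  have hadd : c f + c (𝟙 K - f) = 1 := by
    change i.inv ≫ f ≫ i.hom + i.inv ≫ (𝟙 K - f) ≫ i.hom = 𝟙 A
    simp [Preadditive.sub_comp, Preadditive.comp_sub]
  exact (IsLocalRing.isUnit_or_isUnit_of_add_one hadd).imp (hc _) (hc _)

/-- The dichotomy behind the theorem. An idempotent `p` of `D` lifts to an endomorphism of the whole
triangle because `Hom(K, C₀[1]) = 0`; its component `f` on `K` satisfies
`f ≫ h = h ≫ p[1]`. As `End K` is local, `f` or `1 - f` is invertible, and then `h` kills
`(1 - p)[1]` or `p[1]` respectively, i.e. `1 - p` or `p` factors through `s`. -/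
lemma exists_factor_of_idempotent {D C₀ K : T} {s : D ⟶ C₀} {t : C₀ ⟶ K}
    {h : K ⟶ D⟦(1 : ℤ)⟧} (hdist : Triangle.mk s t h ∈ distTriang T)
    (hext : Ext1Zero K C₀) (hloc : ∀ f : K ⟶ K, IsIso f ∨ IsIso (𝟙 K - f))
    (p q : D ⟶ D) (hpq : p + q = 𝟙 D) (hp : p ≫ q = 0) :
    (∃ k : C₀ ⟶ D, s ≫ k = p) ∨ (∃ k : C₀ ⟶ D, s ≫ k = q) := by
  obtain ⟨g, hg⟩ := exists_factor_of_conn_comp_shift_eq_zero hdist (p ≫ s) (hext _)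
  obtain ⟨f, hf⟩ : ∃ f : K ⟶ K, h ≫ p⟦(1 : ℤ)⟧' = f ≫ h :=
    (complete_distinguished_triangle_morphism _ _ hdist hdist p g hg).imp fun _ h => h.2
  have hp1 : p = 𝟙 D - q := by rw [← hpq, add_sub_cancel_right]
  have hpp : p ≫ p = p := by
    calc p ≫ p = p ≫ (p + q) := by rw [Preadditive.comp_add, hp, add_zero]
      _ = p := by rw [hpq, Category.comp_id]
  rcases hloc f with hi | hi
  · right
    apply exists_factor_of_conn_comp_shift_eq_zero hdist
    rw [← cancel_epi f, ← reassoc_of% hf, ← Functor.map_comp, hp]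
    simp
  · left
    apply exists_factor_of_conn_comp_shift_eq_zero hdist
    rw [← cancel_epi (𝟙 K - f), Preadditive.sub_comp, ← reassoc_of% hf, ← Functor.map_comp, hpp]
    simp

/-- If `t` is right minimal, no nonzero idempotent of `D` factors through `s`: when `p = s ≫ k`,
the endomorphism `1 - k ≫ s` of `C₀` fixes `t`, hence is invertible, yet it kills `p ≫ s`. -/
lemma idempotent_eq_zero_of_minimal {D C₀ K : T} {s : D ⟶ C₀} {t : C₀ ⟶ K} (hst : s ≫ t = 0)
    (hmin : ∀ g : C₀ ⟶ C₀, g ≫ t = t → IsIso g) {p : D ⟶ D} (hp : p ≫ p = p)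
    {k : C₀ ⟶ D} (hk : s ≫ k = p) : p = 0 := by
  have hiso : IsIso (𝟙 C₀ - k ≫ s) := hmin _ (by simp [Preadditive.sub_comp, hst])
  have hps : p ≫ s = 0 := by
    rw [← cancel_mono (𝟙 C₀ - k ≫ s), Preadditive.comp_sub, zero_comp, Category.comp_id,
      Category.assoc, reassoc_of% hk, reassoc_of% hp, sub_self]
  rw [← hp]
  nth_rewrite 2 [← hk]
  rw [reassoc_of% hps, zero_comp]

/-- A direct sum decomposition of `D` has a summand whose projector factors through `s`. -/
lemma exists_factor_of_iso_biprod {D C₀ K : T} {s : D ⟶ C₀} {t : C₀ ⟶ K}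
    {h : K ⟶ D⟦(1 : ℤ)⟧} (hdist : Triangle.mk s t h ∈ distTriang T)
    (hext : Ext1Zero K C₀) (hloc : ∀ f : K ⟶ K, IsIso f ∨ IsIso (𝟙 K - f))
    {Y Z : T} (e : D ≅ Y ⊞ Z) :
    (∃ k : C₀ ⟶ D, s ≫ k = (e.hom ≫ biprod.fst) ≫ (biprod.inl ≫ e.inv)) ∨
      (∃ k : C₀ ⟶ D, s ≫ k = (e.hom ≫ biprod.snd) ≫ (biprod.inr ≫ e.inv)) :=
  exists_factor_of_idempotent hdist hext hloc _ _ (biprod_proj_add_proj e) (by simp)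

/-- A retract of `D` whose projector factors through `C₀` is a retract of `C₀`. -/
lemma isSummand_of_factor {D C₀ Y : T} {s : D ⟶ C₀} {k : C₀ ⟶ D} {a : Y ⟶ D} {r : D ⟶ Y}
    (har : a ≫ r = 𝟙 Y) (hk : s ≫ k = r ≫ a) : IsSummand Y C₀ :=
  ⟨a ≫ s, k ≫ r, by simp [reassoc_of% hk, har]⟩

/-- An indecomposable object of `U + V` lies in `U` or in `V`. -/
lemma mem_or_mem_of_indec {U V : T → Prop} (hU : IsoClosed U) (hV : IsoClosed V) {K : T}
    (hK : plusCat U V K) (hind : Indec K) : U K ∨ V K := by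
  obtain ⟨A, B, hA, hB, ⟨e⟩⟩ := hK
  rcases hind.2 A B e with h0 | h0
  · exact Or.inr (hV (e ≪≫ (isoZeroBiprod h0).symm).symm hB)
  · exact Or.inl (hU (e ≪≫ (isoBiprodZero h0).symm).symm hA)

/-- Let `D → C₀ →t K → D[1]` be a triangle with `C₀ ∈ C`, `K ∈ K = U + V`
with no nonzero direct summand in `C`, and `t` a right `C`-approximation of `K`. If `K`
is indecomposable then `D ≅ C' ⊞ X` with `C' ∈ C` and `X` indecomposable not in `C`;
if moreover `t` is right minimal, `D` itself is indecomposable and not in `C`. -/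
theorem stmt10 [IsTriangulated T] (hKS : IsKrullSchmidt (T := T))
    (U V : T → Prop) (hUiso : IsoClosed U) (hUsum : SumClosed U)
    (hViso : IsoClosed V) (hVsum : SumClosed V)
    (hUV : CotorsionPair U V) (hVU : CotorsionPair V U)
    {D C₀ K : T} (s : D ⟶ C₀) (t : C₀ ⟶ K) (h : K ⟶ D⟦(1 : ℤ)⟧)
    (hdist : Triangle.mk s t h ∈ distTriang T)
    (hC₀ : U C₀ ∧ V C₀) (hK : plusCat U V K)
    (hKred : ∀ X : T, IsSummand X K → (U X ∧ V X) → IsZero X)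
    (happrox : IsRightApprox (fun X => U X ∧ V X) t)
    (hind : Indec K) :
    (∃ (C' X : T), (U C' ∧ V C') ∧ Indec X ∧ ¬ (U X ∧ V X) ∧ Nonempty (D ≅ C' ⊞ X)) ∧
    ((∀ g : C₀ ⟶ C₀, g ≫ t = t → IsIso g) → Indec D ∧ ¬ (U D ∧ V D)) := by
  have hext : ∀ ⦃X : T⦄, U X ∧ V X → Ext1Zero K X := fun X hX =>
    (mem_or_mem_of_indec hUiso hViso hK hind).elim
      (fun hKU => hUV.ext_zero hKU hX.2) (fun hKV => hVU.ext_zero hKV hX.1)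
  have hsummand : ∀ ⦃X : T⦄, IsSummand X C₀ → U X ∧ V X := fun X hX =>
    ⟨hUV.summandClosed_fst hX hC₀.1, hUV.summandClosed_snd hX hC₀.2⟩
  -- Were `h` zero, `K` would be a summand of `C₀`.
  have hh : h ≠ 0 := by
    intro h0
    obtain ⟨r, hr⟩ := Triangle.coyoneda_exact₃ _ hdist (𝟙 K) 
      ((Category.id_comp h).trans h0)
    exact hind.1 (hKred K ⟨𝟙 K, 𝟙 K, by simp⟩ (hsummand ⟨r, t, hr.symm⟩))
  have hst : s ≫ t = 0 := comp_distTriang_mor_zero₁₂ _ hdist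
  have hloc := isIso_or_isIso_id_sub hKS hind
  refine ⟨?_, fun hmin => ⟨⟨fun h0 => hh ?_, fun Y Z e => ?_⟩, fun hD => hh (hext hD h)⟩⟩
  · obtain ⟨Z, A, e, hA, hne⟩ := exists_local_summand_s10 hKS h hh
    have hAC : ¬ (U A ∧ V A) := fun hAC => hne (hext hAC _)
    refine ⟨Z, A, ?_, indec_of_isLocalRing_end hA, hAC, ⟨e⟩⟩
    rcases exists_factor_of_iso_biprod hdist (hext hC₀) hloc e with ⟨k, hk⟩ | ⟨k, hk⟩
    · exact hsummand (isSummand_of_factor (by simp) hk)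
    · exact absurd (hsummand (isSummand_of_factor (by simp) hk)) hAC
  · exact ((shiftFunctor T (1 : ℤ)).map_isZero h0).eq_of_tgt _ _
  · rcases exists_factor_of_iso_biprod hdist (hext hC₀) hloc e with ⟨k, hk⟩ | ⟨k, hk⟩
    · left
      exact isZero_fst_of_proj_fst_eq_zero e
        (idempotent_eq_zero_of_minimal hst hmin (by simp) hk)
    · right
      have h0 := idempotent_eq_zero_of_minimal hst hmin (by simp) hk
      have hid := biprod_proj_add_proj e
      rw [h0, add_zero] at hid
      exact isZero_snd_of_proj_fst_eq_id e hid

end ClusterPaper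
end
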